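/- arXiv:math/0309201 — 4 statements merged into one kernel-verified Lean document; each statement's English description precedes it below -/
import Mathlib

section
/- Let L₂(q) = ∏_{n≥0} 1/((1-q^{5n+1})(1-q^{5n+4})). Then L₂ satisfies the ODE (q d/dq)² F + (-1/5 + 4∑_{n≥1}σ₁(n)q^n)(q d/dq) F - (1/15)·(∑_{n≥1}σ₁(n)q^n + 11∑_{n≥1}σ₃(n)q^n)·F = 0. -/
open Finset

/-- The quadruples `(a, b, x, y)` of positive integers with `a x + b y = n`. -/
def posSolutions (n : ℕ) : Finset (ℕ × ℕ × ℕ × ℕ) :=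
  (Icc 1 n ×ˢ Icc 1 n ×ˢ Icc 1 n ×ˢ Icc 1 n).filter
    fun t => t.1 * t.2.2.1 + t.2.1 * t.2.2.2 = n

theorem mem_posSolutions {n a b x y : ℕ} :
    (a, b, x, y) ∈ posSolutions n ↔
      0 < a ∧ 0 < b ∧ 0 < x ∧ 0 < y ∧ a * x + b * y = n := by
  simp only [posSolutions, mem_filter, mem_product, mem_Icc]
  constructor
  · rintro ⟨⟨⟨ha, -⟩, ⟨hb, -⟩, ⟨hx, -⟩, hy, -⟩, h⟩
    exact ⟨ha, hb, hx, hy, h⟩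
  · rintro ⟨ha, hb, hx, hy, h⟩
    have h1 := Nat.le_mul_of_pos_right a hx
    have h2 := Nat.le_mul_of_pos_left x ha
    have h3 := Nat.le_mul_of_pos_right b hy
    have h4 := Nat.le_mul_of_pos_left y hb
    refine ⟨⟨⟨ha, ?_⟩, ⟨hb, ?_⟩, ⟨hx, ?_⟩, hy, ?_⟩, h⟩ <;> omega

theorem sum_posSolutions_swap (n : ℕ) (f : ℕ → ℕ → ℂ) :
    ∑ t ∈ posSolutions n with t.2.2.2 < t.2.2.1, f t.1 t.2.1 =
      ∑ t ∈ posSolutions n with t.2.2.1 < t.2.2.2, f t.2.1 t.1 := by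
  refine sum_nbij' (fun t => (t.2.1, t.1, t.2.2.2, t.2.2.1))
    (fun t => (t.2.1, t.1, t.2.2.2, t.2.2.1)) ?_ ?_ ?_ ?_ ?_
  all_goals rintro ⟨a, b, x, y⟩ h
  all_goals simp only [mem_filter, mem_posSolutions] at h ⊢
  all_goals grind

theorem sum_posSolutions_fst_gt (n : ℕ) (f : ℕ → ℕ → ℂ) :
    ∑ t ∈ posSolutions n with t.2.1 < t.1, f t.1 t.2.1 =
      ∑ t ∈ posSolutions n with t.2.2.1 < t.2.2.2, f (t.1 + t.2.1) t.2.1 := by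
  refine sum_nbij' (fun t => (t.1 - t.2.1, t.2.1, t.2.2.1, t.2.2.1 + t.2.2.2))
    (fun t => (t.1 + t.2.1, t.2.1, t.2.2.1, t.2.2.2 - t.2.2.1)) ?_ ?_ ?_ ?_ ?_
  · rintro ⟨a, b, x, y⟩ h
    simp only [mem_filter, mem_posSolutions] at h ⊢
    obtain ⟨⟨ha, hb, hx, hy, h⟩, hab⟩ := h
    obtain ⟨c, rfl⟩ := Nat.exists_eq_add_of_lt hab
    refine ⟨⟨by omega, hb, hx, by omega, ?_⟩, by omega⟩
    rw [show b + c + 1 - b = c + 1 by omega, ← h]; ring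
  · rintro ⟨a, b, x, y⟩ h
    simp only [mem_filter, mem_posSolutions] at h ⊢
    obtain ⟨⟨ha, hb, hx, hy, h⟩, hxy⟩ := h
    obtain ⟨c, rfl⟩ := Nat.exists_eq_add_of_lt hxy
    refine ⟨⟨by omega, hb, hx, by omega, ?_⟩, by omega⟩
    rw [show x + c + 1 - x = c + 1 by omega, ← h]; ring
  all_goals rintro ⟨a, b, x, y⟩ h
  all_goals simp only [mem_filter, mem_posSolutions, Prod.mk.injEq] at h ⊢
  · refine ⟨?_, trivial, trivial, ?_⟩ <;> omega
  · refine ⟨?_, trivial, trivial, ?_⟩ <;> omega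
  · rw [Nat.sub_add_cancel h.2.le]

theorem sum_posSolutions_fst_lt (n : ℕ) (f : ℕ → ℕ → ℂ) :
    ∑ t ∈ posSolutions n with t.1 < t.2.1, f t.1 t.2.1 =
      ∑ t ∈ posSolutions n with t.2.1 < t.1, f t.2.1 t.1 := by
  refine sum_nbij' (fun t => (t.2.1, t.1, t.2.2.2, t.2.2.1))
    (fun t => (t.2.1, t.1, t.2.2.2, t.2.2.1)) ?_ ?_ ?_ ?_ ?_
  all_goals rintro ⟨a, b, x, y⟩ h
  all_goals simp only [mem_filter, mem_posSolutions] at h ⊢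
  all_goals grind

theorem sum_posSolutions_thd_eq (n : ℕ) (f : ℕ → ℕ → ℂ) :
    ∑ t ∈ posSolutions n with t.2.2.1 = t.2.2.2, f t.1 t.2.1 =
      ∑ d ∈ n.divisors, ∑ l ∈ Ico 1 d, f (d - l) l := by
  rw [sum_sigma']
  refine sum_bij' (fun t _ => (⟨t.1 + t.2.1, t.2.1⟩ : Σ _ : ℕ, ℕ))
    (fun s _ => (s.1 - s.2, s.2, n / s.1, n / s.1)) ?_ ?_ ?_ ?_ ?_
  · rintro ⟨a, b, x, y⟩ h
    simp only [mem_filter, mem_posSolutions, mem_sigma, Nat.mem_divisors, mem_Ico] at h ⊢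
    obtain ⟨⟨ha, hb, hx, hy, h⟩, rfl⟩ := h
    have : 0 < a * x := Nat.mul_pos ha hx
    exact ⟨⟨⟨x, by rw [← h]; ring⟩, by omega⟩, by omega, by omega⟩
  · rintro ⟨d, l⟩ h
    simp only [mem_filter, mem_posSolutions, mem_sigma, Nat.mem_divisors, mem_Ico] at h ⊢
    obtain ⟨⟨⟨e, rfl⟩, hn⟩, hl, hld⟩ := h
    have he : 0 < e := Nat.pos_of_ne_zero (by rintro rfl; simp at hn)
    rw [Nat.mul_div_cancel_left e (by omega)]
    refine ⟨⟨by omega, hl, he, he, ?_⟩, trivial⟩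
    rw [← Nat.add_mul, Nat.sub_add_cancel hld.le]
  · rintro ⟨a, b, x, y⟩ h
    simp only [mem_filter, mem_posSolutions] at h ⊢
    obtain ⟨⟨ha, hb, hx, hy, h⟩, rfl⟩ := h
    have : n / (a + b) = x := by
      rw [← h, ← Nat.add_mul, Nat.mul_div_cancel_left x (by omega)]
    simp [this]
  · rintro ⟨d, l⟩ h
    simp only [mem_sigma, mem_Ico] at h
    simp [Nat.sub_add_cancel h.2.2.le]
  · rintro ⟨a, b, x, y⟩ h
    simp

theorem sum_posSolutions_fst_eq (n : ℕ) (f : ℕ → ℕ → ℂ) :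
    ∑ t ∈ posSolutions n with t.1 = t.2.1, f t.1 t.2.1 =
      ∑ d ∈ n.divisors, ((n / d : ℕ) - 1 : ℂ) * f d d := by
  have key : ∑ t ∈ posSolutions n with t.1 = t.2.1, f t.1 t.2.1 =
      ∑ d ∈ n.divisors, ∑ l ∈ Ico 1 (n / d), f d d := by
    rw [sum_sigma']
    refine sum_bij' (fun t _ => (⟨t.1, t.2.2.2⟩ : Σ _ : ℕ, ℕ))
      (fun s _ => (s.1, s.1, n / s.1 - s.2, s.2)) ?_ ?_ ?_ ?_ ?_
    · rintro ⟨a, b, x, y⟩ h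
      simp only [mem_filter, mem_posSolutions, mem_sigma, Nat.mem_divisors, mem_Ico] at h ⊢
      obtain ⟨⟨ha, hb, hx, hy, h⟩, rfl⟩ := h
      have : 0 < a * x := Nat.mul_pos ha hx
      rw [← Nat.mul_add] at h
      refine ⟨⟨⟨_, h.symm⟩, ?_⟩, hy, ?_⟩
      · rw [← h]; positivity
      · rw [← h, Nat.mul_div_cancel_left _ ha]; omega
    · rintro ⟨d, l⟩ h
      simp only [mem_filter, mem_posSolutions, mem_sigma, Nat.mem_divisors, mem_Ico] at h ⊢
      obtain ⟨⟨⟨e, rfl⟩, hn⟩, hl, hld⟩ := h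
      have hd : 0 < d := Nat.pos_of_ne_zero (by rintro rfl; simp at hn)
      rw [Nat.mul_div_cancel_left e hd] at *
      refine ⟨⟨hd, hd, by omega, hl, ?_⟩, trivial⟩
      rw [← Nat.mul_add, Nat.sub_add_cancel hld.le]
    · rintro ⟨a, b, x, y⟩ h
      simp only [mem_filter, mem_posSolutions] at h ⊢
      obtain ⟨⟨ha, hb, hx, hy, h⟩, rfl⟩ := h
      have : n / a = x + y := by
        rw [← h, ← Nat.mul_add, Nat.mul_div_cancel_left _ ha]
      simp [this]
    · rintro ⟨d, l⟩ h
      simp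
    · rintro ⟨a, b, x, y⟩ h
      simp only [mem_filter] at h
      simp [← h.2]
  rw [key]
  refine sum_congr rfl fun d hd => ?_
  have : 1 ≤ n / d := Nat.div_pos (Nat.divisor_le hd) (Nat.pos_of_mem_divisors hd)
  simp [Nat.cast_sub this]

theorem sum_eq_sum_lt_add_sum_eq_add_sum_gt {ι : Type*} (s : Finset ι) (u v : ι → ℕ) (f : ι → ℂ) :
    ∑ t ∈ s, f t = ∑ t ∈ s with u t < v t, f t + ∑ t ∈ s with u t = v t, f t +
      ∑ t ∈ s with v t < u t, f t := by
  simp only [sum_filter, ← sum_add_distrib]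
  refine sum_congr rfl fun t _ => ?_
  rcases lt_trichotomy (u t) (v t) with h | h | h
  · simp [h, h.ne, h.not_gt]
  · simp [h]
  · simp [h, h.ne', h.not_gt]

/-- A summation formula of Liouville type. -/
theorem sum_posSolutions_of_symm (n : ℕ) (h w : ℕ → ℕ → ℂ) (h_symm : ∀ a b, h a b = h b a)
    (w_symm : ∀ a b, w a b = w b a) (hw : ∀ a b, w a b = h a b - h (a + b) b) :
    ∑ t ∈ posSolutions n, w t.1 t.2.1 =
      ∑ d ∈ n.divisors, (((n / d : ℕ) - 1 : ℂ) * h d d - ∑ l ∈ Ico 1 d, h d l) := by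
  have split_thd (f : ℕ → ℕ → ℂ) (hf : ∀ a b, f a b = f b a) :
      ∑ t ∈ posSolutions n, f t.1 t.2.1 =
        2 * ∑ t ∈ posSolutions n with t.2.2.1 < t.2.2.2, f t.1 t.2.1 +
          ∑ d ∈ n.divisors, ∑ l ∈ Ico 1 d, f (d - l) l := by
    rw [sum_eq_sum_lt_add_sum_eq_add_sum_gt _ (fun t => t.2.2.1) (fun t => t.2.2.2),
      sum_posSolutions_swap, sum_posSolutions_thd_eq]
    simp_rw [fun t : ℕ × ℕ × ℕ × ℕ => hf t.2.1 t.1]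
    ring
  have split_fst : ∑ t ∈ posSolutions n, h t.1 t.2.1 =
        2 * ∑ t ∈ posSolutions n with t.2.2.1 < t.2.2.2, h (t.1 + t.2.1) t.2.1 +
          ∑ d ∈ n.divisors, ((n / d : ℕ) - 1 : ℂ) * h d d := by
    rw [sum_eq_sum_lt_add_sum_eq_add_sum_gt _ (fun t => t.1) (fun t => t.2.1),
      sum_posSolutions_fst_lt, sum_posSolutions_fst_eq]
    simp_rw [fun t : ℕ × ℕ × ℕ × ℕ => h_symm t.2.1 t.1]
    rw [sum_posSolutions_fst_gt]
    ring
  have hsplit := split_thd h h_symm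
  rw [split_thd w w_symm]
  have hdiag : ∑ d ∈ n.divisors, ∑ l ∈ Ico 1 d, w (d - l) l =
      ∑ d ∈ n.divisors, ∑ l ∈ Ico 1 d, h (d - l) l - ∑ d ∈ n.divisors, ∑ l ∈ Ico 1 d, h d l := by
    simp_rw [← sum_sub_distrib]
    refine sum_congr rfl fun d _ => sum_congr rfl fun l hl => ?_
    rw [hw, Nat.sub_add_cancel (mem_Ico.mp hl).2.le]
  rw [hdiag, sum_sub_distrib]
  simp_rw [hw, sum_sub_distrib]
  linear_combination split_fst - hsplit

theorem sum_antidiagonal_sum_divisors_mul (n : ℕ) (f g : ℕ → ℂ) :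
    ∑ p ∈ antidiagonal n, (∑ d ∈ p.1.divisors, f d) * ∑ d ∈ p.2.divisors, g d =
      ∑ t ∈ posSolutions n, f t.1 * g t.2.1 := by
  simp_rw [← Nat.sum_divisorsAntidiagonal fun d _ => f d,
    ← Nat.sum_divisorsAntidiagonal fun d _ => g d, sum_mul_sum,
    ← sum_product']
  rw [sum_sigma']
  refine sum_bij' (fun s _ => (s.2.1.1, s.2.2.1, s.2.1.2, s.2.2.2))
    (fun t _ => ⟨(t.1 * t.2.2.1, t.2.1 * t.2.2.2), ((t.1, t.2.2.1), (t.2.1, t.2.2.2))⟩)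
    ?_ ?_ ?_ ?_ ?_
  · rintro ⟨⟨i, j⟩, ⟨a, x⟩, b, y⟩ h
    simp only [mem_sigma, HasAntidiagonal.mem_antidiagonal, mem_product,
      Nat.mem_divisorsAntidiagonal] at h
    obtain ⟨rfl, ⟨rfl, h1⟩, rfl, h2⟩ := h
    simp only [mem_posSolutions]
    simp only [ne_eq, mul_eq_zero, not_or, ← Nat.pos_iff_ne_zero] at h1 h2
    exact ⟨h1.1, h2.1, h1.2, h2.2, trivial⟩
  · rintro ⟨a, b, x, y⟩ h
    rw [mem_posSolutions] at h
    simp only [mem_sigma, HasAntidiagonal.mem_antidiagonal, mem_product,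
      Nat.mem_divisorsAntidiagonal]
    refine ⟨h.2.2.2.2, ⟨trivial, ?_⟩, trivial, ?_⟩ <;> simp only [ne_eq, mul_eq_zero, not_or] <;> omega
  · rintro ⟨⟨i, j⟩, ⟨a, x⟩, b, y⟩ h
    simp only [mem_sigma, HasAntidiagonal.mem_antidiagonal, mem_product,
      Nat.mem_divisorsAntidiagonal] at h
    obtain ⟨rfl, ⟨rfl, h1⟩, rfl, h2⟩ := h
    rfl
  · rintro ⟨a, b, x, y⟩ h
    rfl
  · rintro ⟨⟨i, j⟩, ⟨a, x⟩, b, y⟩ h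
    rfl

/-- The indicator function of the residue classes `±1` modulo `5`. -/
def pmOne (r : ZMod 5) : ℤ := if r = 1 ∨ r = 4 then 1 else 0

/-- The coefficient of `a ^ 2` in `quadForm`, times `5`. -/
def sqCoeff (r s : ZMod 5) : ℤ := if s = 0 then -5 * pmOne r else -2 - 6 * pmOne s

/-- The coefficient of `a * b` in `quadForm`, times `5`. -/
def mulCoeff (r s : ZMod 5) : ℤ := sqCoeff s (r - s) - sqCoeff s r - sqCoeff r s

/-- A symmetric quadratic form with coefficients depending on residues modulo `5`. -/
noncomputable def quadForm (a b : ℕ) : ℂ :=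
  (sqCoeff a b * a ^ 2 + mulCoeff a b * (a * b) + sqCoeff b a * b ^ 2) / 5

theorem quadForm_symm (a b : ℕ) : quadForm a b = quadForm b a := by
  have h : ∀ r s : ZMod 5, mulCoeff r s = mulCoeff s r := by decide
  rw [quadForm, quadForm, h a b]
  ring

theorem quadForm_self (a : ℕ) : quadForm a a = -pmOne a * a ^ 2 := by
  have h : ∀ r : ZMod 5, sqCoeff r r + mulCoeff r r + sqCoeff r r = -5 * pmOne r := by decide
  have h' : (sqCoeff a a + mulCoeff a a + sqCoeff a a : ℂ) = -5 * pmOne a := mod_cast h a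
  rw [quadForm]
  linear_combination (a : ℂ) ^ 2 / 5 * h'

theorem quadForm_sub_quadForm_add (a b : ℕ) :
    quadForm a b - quadForm (a + b) b =
      (pmOne a * pmOne b + 2 * pmOne a + 2 * pmOne b : ℂ) * (a * b) := by
  have h₁ : ∀ r s : ZMod 5, sqCoeff r s = sqCoeff (r + s) s := by decide
  have h₂ : ∀ r s : ZMod 5, mulCoeff r s - 2 * sqCoeff (r + s) s - mulCoeff (r + s) s =
    5 * (pmOne r * pmOne s + 2 * pmOne r + 2 * pmOne s) := by decide
  have h₃ : ∀ r s : ZMod 5, sqCoeff s r = sqCoeff (r + s) s + mulCoeff (r + s) s +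
    sqCoeff s (r + s) := by decide
  have h₁' : (sqCoeff a b : ℂ) = sqCoeff (a + b) b := mod_cast h₁ a b
  have h₂' : (mulCoeff a b - 2 * sqCoeff (a + b) b - mulCoeff (a + b) b : ℂ) =
    5 * (pmOne a * pmOne b + 2 * pmOne a + 2 * pmOne b) := mod_cast h₂ a b
  have h₃' : (sqCoeff b a : ℂ) = sqCoeff (a + b) b + mulCoeff (a + b) b +
    sqCoeff b (a + b) := mod_cast h₃ a b
  simp only [quadForm, Nat.cast_add]
  linear_combination (a : ℂ) ^ 2 / 5 * h₁' + (a * b : ℂ) / 5 * h₂' + (b : ℂ) ^ 2 / 5 * h₃'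

theorem quadForm_zero_right (a : ℕ) : quadForm a 0 = -pmOne a * a ^ 2 := by
  simp [quadForm, sqCoeff]
  ring

theorem quadForm_eq_of_residue {d r : ℕ} (hd : (d : ZMod 5) = r) (i j : ℕ) :
    quadForm d (5 * i + j) = (sqCoeff r j * d ^ 2 + mulCoeff r j * (d * (5 * i + j)) +
      sqCoeff j r * (5 * i + j) ^ 2) / 5 := by
  have h : ((5 * i + j : ℕ) : ZMod 5) = j := by
    rw [Nat.cast_add, Nat.cast_mul, show ((5 : ℕ) : ZMod 5) = 0 from rfl, zero_mul, zero_add]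
  rw [quadForm, h, hd]
  push_cast
  rfl

theorem sum_range_five_mul_quadForm {d r : ℕ} (hd : (d : ZMod 5) = r) (k : ℕ) :
    ∑ l ∈ range (5 * k), quadForm d l =
      (∑ j ∈ range 5, (sqCoeff r j * d ^ 2 * k +
        mulCoeff r j * d * (5 * (k * (k - 1) / 2) + j * k) +
        sqCoeff j r * (25 * (k * (k - 1) * (2 * k - 1) / 6) + 10 * j * (k * (k - 1) / 2) +
          j ^ 2 * k) : ℂ)) / 5 := by
  induction k with
  | zero => simp
  | succ k ih =>
    rw [mul_add_one, sum_range_add, ih, sum_div, sum_div, ← sum_add_distrib]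
    refine sum_congr rfl fun j _ => ?_
    rw [quadForm_eq_of_residue hd]
    push_cast
    ring

theorem sum_range_quadForm (d : ℕ) :
    ∑ l ∈ range d, quadForm d l = -(pmOne d * d / 5 + (d + 11 * d ^ 3) / 15 : ℂ) := by
  obtain ⟨k, r, hr, rfl⟩ : ∃ k r, r < 5 ∧ d = 5 * k + r :=
    ⟨d / 5, d % 5, Nat.mod_lt _ (by norm_num), (Nat.div_add_mod d 5).symm⟩
  have hd : ((5 * k + r : ℕ) : ZMod 5) = r := by
    rw [Nat.cast_add, Nat.cast_mul, show ((5 : ℕ) : ZMod 5) = 0 from rfl, zero_mul, zero_add]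
  rw [sum_range_add, sum_range_five_mul_quadForm hd]
  simp_rw [quadForm_eq_of_residue hd, hd]
  interval_cases r <;>
    simp +decide [sum_range_succ, sqCoeff, mulCoeff, pmOne] <;> ring

/-- The sum of the divisors of `n` that are `±1` modulo `5`. -/
noncomputable def pmOneSigma (n : ℕ) : ℂ := ∑ d ∈ n.divisors, (pmOne d * d : ℂ)

theorem pmOneSigma_convolution (n : ℕ) :
    n * pmOneSigma n + ∑ p ∈ antidiagonal n, pmOneSigma p.1 * pmOneSigma p.2 =
      pmOneSigma n / 5 -
        4 * ∑ p ∈ antidiagonal n, (∑ d ∈ p.1.divisors, (d : ℂ)) * pmOneSigma p.2 +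
        (∑ d ∈ n.divisors, (d : ℂ) + 11 * ∑ d ∈ n.divisors, (d : ℂ) ^ 3) / 15 := by
  have hsum := sum_posSolutions_of_symm n quadForm
    (fun a b => (pmOne a * pmOne b + 2 * pmOne a + 2 * pmOne b : ℂ) * (a * b)) quadForm_symm
    (fun a b => by ring) fun a b => (quadForm_sub_quadForm_add a b).symm
  have hprod : ∑ t ∈ posSolutions n,
      (pmOne t.1 * pmOne t.2.1 + 2 * pmOne t.1 + 2 * pmOne t.2.1 : ℂ) * (t.1 * t.2.1) =
      ∑ p ∈ antidiagonal n, pmOneSigma p.1 * pmOneSigma p.2 +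
        2 * ∑ p ∈ antidiagonal n, pmOneSigma p.1 * (∑ d ∈ p.2.divisors, (d : ℂ)) +
        2 * ∑ p ∈ antidiagonal n, (∑ d ∈ p.1.divisors, (d : ℂ)) * pmOneSigma p.2 := by
    simp only [pmOneSigma, sum_antidiagonal_sum_divisors_mul]
    simp only [mul_sum, ← sum_add_distrib]
    exact sum_congr rfl fun t _ => by ring
  have hswap : ∑ p ∈ antidiagonal n, pmOneSigma p.1 * (∑ d ∈ p.2.divisors, (d : ℂ)) =
      ∑ p ∈ antidiagonal n, (∑ d ∈ p.1.divisors, (d : ℂ)) * pmOneSigma p.2 := by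
    rw [← Finset.Nat.sum_antidiagonal_swap]
    exact sum_congr rfl fun p _ => mul_comm _ _
  have hdiv : ∑ d ∈ n.divisors,
      (((n / d : ℕ) - 1 : ℂ) * quadForm d d - ∑ l ∈ Ico 1 d, quadForm d l) =
      -(n * pmOneSigma n) + pmOneSigma n / 5 +
        (∑ d ∈ n.divisors, (d : ℂ) + 11 * ∑ d ∈ n.divisors, (d : ℂ) ^ 3) / 15 := by
    simp only [pmOneSigma, mul_sum, sum_div, ← sum_add_distrib, ← sum_neg_distrib]
    refine sum_congr rfl fun d hd => ?_
    have hIco := sum_range_quadForm d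
    rw [range_eq_Ico, sum_eq_sum_Ico_succ_bot (Nat.pos_of_mem_divisors hd),
      quadForm_zero_right, zero_add] at hIco
    have hn : ((n / d : ℕ) * d : ℂ) = n := mod_cast Nat.div_mul_cancel (Nat.dvd_of_mem_divisors hd)
    rw [quadForm_self, ← hn]
    linear_combination -hIco
  rw [hprod, hswap, hdiv] at hsum
  linear_combination hsum

theorem norm_sum_divisors_le {f : ℕ → ℂ} {k : ℕ} (hf : ∀ d, ‖f d‖ ≤ (d : ℝ) ^ k) (n : ℕ) :
    ‖∑ d ∈ n.divisors, f d‖ ≤ (n : ℝ) ^ (k + 1) := by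
  calc ‖∑ d ∈ n.divisors, f d‖ ≤ ∑ d ∈ n.divisors, (n : ℝ) ^ k :=
        norm_sum_le_of_le _ fun d hd => (hf d).trans (by gcongr; exact Nat.divisor_le hd)
    _ = n.divisors.card * (n : ℝ) ^ k := by simp
    _ ≤ n * (n : ℝ) ^ k := by gcongr; exact Nat.card_divisors_le_self n
    _ = (n : ℝ) ^ (k + 1) := by ring

theorem summable_norm_mul_pow {c : ℕ → ℂ} {k : ℕ} (hc : ∀ n, ‖c n‖ ≤ (n : ℝ) ^ k) {q : ℂ}
    (hq : ‖q‖ < 1) : Summable fun n => ‖c n * q ^ n‖ := by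
  refine Summable.of_nonneg_of_le (fun _ => norm_nonneg _) (fun n => ?_)
    (summable_norm_pow_mul_geometric_of_norm_lt_one k hq)
  rw [norm_mul, norm_mul, norm_pow (n : ℂ), Complex.norm_natCast]
  gcongr
  exact hc n

theorem hasDerivAt_tsum_mul_pow {c : ℕ → ℂ} {k : ℕ} (hc : ∀ n, ‖c n‖ ≤ (n : ℝ) ^ k) {q : ℂ}
    (hq : ‖q‖ < 1) :
    HasDerivAt (fun z => ∑' n, c n * z ^ n) (∑' n, c n * (n * q ^ (n - 1))) q := by
  obtain ⟨r, hqr, hr⟩ := exists_between hq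
  have hr0 : 0 < r := (norm_nonneg q).trans_lt hqr
  have hu : Summable fun n : ℕ => (n : ℝ) ^ (k + 1) * r ^ (n - 1) := by
    have h := (summable_pow_mul_geometric_of_norm_lt_one (R := ℝ) (r := r) (k + 1)
      (by rwa [Real.norm_of_nonneg hr0.le])).mul_right r⁻¹
    refine h.congr fun n => ?_
    rcases n with _ | n
    · simp
    · rw [Nat.add_sub_cancel, pow_succ r]
      field_simp
  refine hasDerivAt_tsum_of_isPreconnected (t := Metric.ball 0 r) (y₀ := q) hu Metric.isOpen_ball
    (convex_ball 0 r).isPreconnected (fun n y _ => (hasDerivAt_pow n y).const_mul (c n))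
    (fun n y hy => ?_) (by simpa using hqr) (summable_norm_mul_pow hc hq).of_norm
    (by simpa using hqr)
  rw [norm_mul, norm_mul, Complex.norm_natCast, norm_pow, pow_succ, mul_assoc]
  have hy' : ‖y‖ ≤ r := by simpa using (Metric.mem_ball.mp hy).le
  gcongr
  exact hc n

theorem mul_deriv_tsum_mul_pow {c : ℕ → ℂ} {k : ℕ} (hc : ∀ n, ‖c n‖ ≤ (n : ℝ) ^ k) {q : ℂ}
    (hq : ‖q‖ < 1) :
    q * deriv (fun z => ∑' n, c n * z ^ n) q = ∑' n : ℕ, n * c n * q ^ n := by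
  rw [(hasDerivAt_tsum_mul_pow hc hq).deriv, ← tsum_mul_left]
  refine tsum_congr fun n => ?_
  rcases n with _ | n
  · simp
  · rw [Nat.add_sub_cancel, pow_succ]
    ring

theorem tsum_lambert_eq_tsum_sum_divisors {g : ℕ → ℂ} (hg : ∀ m, ‖g m‖ ≤ m) {q : ℂ}
    (hq : ‖q‖ < 1) :
    ∑' m : ℕ, g m * q ^ m / (1 - q ^ m) = ∑' n : ℕ, (∑ d ∈ n.divisors, g d) * q ^ n := by
  have hg0 : g 0 = 0 := by simpa using hg 0
  have hF : Summable fun c : ℕ+ × ℕ+ => g c.2 * q ^ (c.1 * c.2 : ℕ) := by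
    refine Summable.of_norm_bounded (summable_prod_mul_pow 1 hq).norm fun c => ?_
    rw [norm_mul, norm_mul, pow_one, Complex.norm_natCast]
    gcongr
    exact hg c.2
  have hleft : Summable fun m : ℕ => g m * q ^ m / (1 - q ^ m) := by
    refine Summable.of_norm_bounded (summable_norm_pow_mul_geometric_div_one_sub 1 hq).norm
      fun m => ?_
    rw [norm_div, norm_div, norm_mul, norm_mul, pow_one, Complex.norm_natCast]
    gcongr
    exact hg m
  have hright : Summable fun n : ℕ => (∑ d ∈ n.divisors, g d) * q ^ n :=
    (summable_norm_mul_pow (norm_sum_divisors_le (k := 1) (by simpa using hg)) hq).of_norm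
  rw [← tsum_zero_pnat_eq_tsum_nat hleft, ← tsum_zero_pnat_eq_tsum_nat hright]
  simp only [hg0, Nat.divisors_zero, sum_empty, zero_mul, zero_div, zero_add]
  have hgeom (m : ℕ+) : g m * q ^ (m : ℕ) / (1 - q ^ (m : ℕ)) =
      ∑' k : ℕ+, g m * q ^ (k * m : ℕ) := by
    have hqm : ‖q ^ (m : ℕ)‖ < 1 := by
      rw [norm_pow]; exact pow_lt_one₀ (norm_nonneg q) hq m.ne_zero
    rw [tsum_mul_left, tsum_pnat_eq_tsum_succ (f := fun k => q ^ (k * (m : ℕ))), div_eq_mul_inv,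
      ← tsum_geometric_of_norm_lt_one hqm, mul_assoc, ← tsum_mul_left]
    congr 1
    exact tsum_congr fun k => by rw [← pow_mul, ← pow_add]; ring_nf
  have hcomm : Summable fun c : ℕ+ × ℕ+ => g c.1 * q ^ (c.2 * c.1 : ℕ) := hF.prod_symm
  rw [tsum_congr hgeom, ← hcomm.tsum_prod, ← (Equiv.prodComm ℕ+ ℕ+).tsum_eq,
    ← sigmaAntidiagonalEquivProd.tsum_eq]
  have hsigma := sigmaAntidiagonalEquivProd.summable_iff.mpr hF
  refine (Summable.tsum_sigma (γ := fun n : ℕ+ => (n : ℕ).divisorsAntidiagonal) hsigma).trans ?_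
  refine tsum_congr fun n => ?_
  rw [tsum_fintype, ← Nat.sum_divisorsAntidiagonal' (fun _ d => g d), sum_mul]
  rw [← (n : ℕ).divisorsAntidiagonal.sum_attach]
  refine sum_congr rfl fun x _ => ?_
  exact congrArg (fun m => g x.1.2 * q ^ m) (Nat.mem_divisorsAntidiagonal.mp x.2).1

theorem norm_pmOne_mul_le (d : ℕ) : ‖(pmOne d * d : ℂ)‖ ≤ d := by
  have h : ∀ r : ZMod 5, |pmOne r| ≤ 1 := by decide
  rw [norm_mul, Complex.norm_natCast, Complex.norm_intCast]
  exact mul_le_of_le_one_left d.cast_nonneg (mod_cast h d)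

theorem norm_pmOneSigma_le (n : ℕ) : ‖pmOneSigma n‖ ≤ (n : ℝ) ^ 2 :=
  norm_sum_divisors_le (k := 1) (by simpa using norm_pmOne_mul_le) n

theorem one_sub_pow_ne_zero {q : ℂ} (hq : ‖q‖ < 1) {m : ℕ} (hm : m ≠ 0) : 1 - q ^ m ≠ 0 := by
  refine sub_ne_zero.mpr fun h => ?_
  have := pow_lt_one₀ (norm_nonneg q) hq hm
  rw [← norm_pow, ← h, norm_one] at this
  exact this.false

/-- The `n`-th factor of the reciprocal of the Rogers–Ramanujan product. -/
noncomputable def rrFactor (n : ℕ) (q : ℂ) : ℂ := (1 - q ^ (5 * n + 1)) * (1 - q ^ (5 * n + 4))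

theorem rrFactor_ne_zero {q : ℂ} (hq : ‖q‖ < 1) (n : ℕ) : rrFactor n q ≠ 0 :=
  mul_ne_zero (one_sub_pow_ne_zero hq (by simp)) (one_sub_pow_ne_zero hq (by simp))

theorem differentiable_rrFactor (n : ℕ) : Differentiable ℂ (rrFactor n) := by
  unfold rrFactor
  fun_prop

theorem norm_rrFactor_sub_one_le {q : ℂ} {r : ℝ} (hqr : ‖q‖ ≤ r) (hr : r < 1) (n : ℕ) :
    ‖rrFactor n q - 1‖ ≤ 3 * r ^ n := by
  have hr0 : 0 ≤ r := (norm_nonneg q).trans hqr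
  have hpow (m : ℕ) (hm : n ≤ m) : ‖q ^ m‖ ≤ r ^ n := by
    rw [norm_pow]
    exact (pow_le_pow_left₀ (norm_nonneg q) hqr m).trans (pow_le_pow_of_le_one hr0 hr.le hm)
  have h₁ := hpow (5 * n + 1) (by omega)
  have h₂ := hpow (5 * n + 4) (by omega)
  have h₃ := hpow (5 * n + 1 + (5 * n + 4)) (by omega)
  have h : rrFactor n q - 1 =
      q ^ (5 * n + 1 + (5 * n + 4)) - q ^ (5 * n + 1) - q ^ (5 * n + 4) := by
    rw [rrFactor, pow_add q (5 * n + 1)]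
    ring
  rw [h]
  linarith [norm_sub_le (q ^ (5 * n + 1 + (5 * n + 4)) - q ^ (5 * n + 1)) (q ^ (5 * n + 4)),
    norm_sub_le (q ^ (5 * n + 1 + (5 * n + 4))) (q ^ (5 * n + 1))]

theorem multipliableLocallyUniformlyOn_rrFactor {r : ℝ} (hr0 : 0 ≤ r) (hr : r < 1) :
    MultipliableLocallyUniformlyOn rrFactor (Metric.ball 0 r) := by
  have h := Summable.multipliableLocallyUniformlyOn_nat_one_add
    (f := fun n q => rrFactor n q - 1) (u := fun n => 3 * r ^ n) (K := Metric.ball 0 r)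
    Metric.isOpen_ball ((summable_geometric_of_lt_one hr0 hr).mul_left 3)
    (.of_forall fun n q hq => norm_rrFactor_sub_one_le (mem_ball_zero_iff.mp hq).le hr n)
    (fun n => ((differentiable_rrFactor n).continuous.sub continuous_const).continuousOn)
  simpa only [add_sub_cancel] using h

theorem tprod_rrFactor_ne_zero {q : ℂ} (hq : ‖q‖ < 1) : ∏' n, rrFactor n q ≠ 0 := by
  have h := tprod_one_add_ne_zero_of_summable (f := fun n => rrFactor n q - 1)
    (fun n => by simpa using rrFactor_ne_zero hq n)
    (Summable.of_nonneg_of_le (fun _ => norm_nonneg _)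
      (fun n => norm_rrFactor_sub_one_le le_rfl hq n)
      ((summable_geometric_of_lt_one (norm_nonneg q) hq).mul_left 3))
  simpa only [add_sub_cancel] using h

theorem differentiableAt_tprod_rrFactor {q : ℂ} (hq : ‖q‖ < 1) :
    DifferentiableAt ℂ (fun z => ∏' n, rrFactor n z) q := by
  obtain ⟨r, hqr, hr⟩ := exists_between hq
  have hmem : q ∈ Metric.ball 0 r := by simpa using hqr
  have hm := multipliableLocallyUniformlyOn_rrFactor ((norm_nonneg q).trans hqr.le) hr
  refine DifferentiableOn.differentiableAt ?_ (Metric.isOpen_ball.mem_nhds hmem)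
  refine hm.hasProdLocallyUniformlyOn.differentiableOn (.of_forall fun s => ?_)
    Metric.isOpen_ball
  simpa [Finset.prod_fn] using
    DifferentiableOn.finsetProd fun n _ => (differentiable_rrFactor n).differentiableOn

theorem mul_logDeriv_one_sub_pow (m : ℕ) (q : ℂ) :
    q * logDeriv (fun z => 1 - z ^ m) q = -(m * q ^ m / (1 - q ^ m)) := by
  rw [logDeriv_apply, deriv_const_sub, deriv_pow_field]
  rcases m with _ | m
  · simp
  · rw [Nat.add_sub_cancel, pow_succ]
    ring

theorem mul_logDeriv_rrFactor {q : ℂ} (hq : ‖q‖ < 1) (n : ℕ) :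
    q * logDeriv (rrFactor n) q =
      -(((5 * n + 1 : ℕ) : ℂ) * q ^ (5 * n + 1) / (1 - q ^ (5 * n + 1)) +
        ((5 * n + 4 : ℕ) : ℂ) * q ^ (5 * n + 4) / (1 - q ^ (5 * n + 4))) := by
  have h : logDeriv (rrFactor n) q = logDeriv (fun z => 1 - z ^ (5 * n + 1)) q +
      logDeriv (fun z => 1 - z ^ (5 * n + 4)) q :=
    logDeriv_mul q (one_sub_pow_ne_zero hq (by simp)) (one_sub_pow_ne_zero hq (by simp))
      (by fun_prop) (by fun_prop)
  rw [h, mul_add, mul_logDeriv_one_sub_pow, mul_logDeriv_one_sub_pow, neg_add]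

theorem hasSum_mul_logDeriv_rrFactor {q : ℂ} (hq : ‖q‖ < 1) :
    HasSum (fun n => q * logDeriv (rrFactor n) q) (-∑' n, pmOneSigma n * q ^ n) := by
  let G : ℕ → ℂ := fun m => m * q ^ m / (1 - q ^ m)
  have hG : Summable G := by
    simpa [G] using summable_norm_pow_mul_geometric_div_one_sub 1 hq
  have hG' (j : ℕ) : Summable fun n => G (5 * n + j) :=
    hG.comp_injective fun a b h => by simpa using h
  have hpm : Summable fun m : ℕ => (pmOne m * m : ℂ) * q ^ m / (1 - q ^ m) := by
    refine Summable.of_norm_bounded hG.norm fun m => ?_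
    simp only [G, norm_div, norm_mul _ (q ^ m), Complex.norm_natCast]
    gcongr
    exact norm_pmOne_mul_le m
  have hclass (j : ZMod 5) : ∑' n : ℕ, (pmOne (j.val + 5 * n : ℕ) * (j.val + 5 * n : ℕ) : ℂ) *
      q ^ (j.val + 5 * n) / (1 - q ^ (j.val + 5 * n)) =
      pmOne j * ∑' n : ℕ, G (5 * n + j.val) := by
    rw [← tsum_mul_left]
    refine tsum_congr fun n => ?_
    have h : ((j.val + 5 * n : ℕ) : ZMod 5) = j := by
      rw [Nat.cast_add, Nat.cast_mul, show ((5 : ℕ) : ZMod 5) = 0 from rfl, zero_mul, add_zero,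
        ZMod.natCast_zmod_val]
    rw [h, add_comm j.val]
    simp only [G]
    ring
  have hsum : ∑' n, pmOneSigma n * q ^ n = ∑' n, G (5 * n + 1) + ∑' n, G (5 * n + 4) := by
    simp only [pmOneSigma]
    rw [← tsum_lambert_eq_tsum_sum_divisors norm_pmOne_mul_le hq, Nat.sumByResidueClasses hpm 5]
    simp_rw [hclass]
    have huniv (F : ZMod 5 → ℂ) : ∑ j, F j = F 0 + F 1 + F 2 + F 3 + F 4 := Fin.sum_univ_five F
    have h0 : pmOne 0 = 0 := by decide
    have h1 : pmOne 1 = 1 := by decide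
    have h2 : pmOne 2 = 0 := by decide
    have h3 : pmOne 3 = 0 := by decide
    have h4 : pmOne 4 = 1 := by decide
    rw [huniv, h0, h1, h2, h3, h4, show (1 : ZMod 5).val = 1 from rfl,
      show (4 : ZMod 5).val = 4 from rfl]
    simp
  rw [hsum]
  simp_rw [mul_logDeriv_rrFactor hq]
  exact ((hG' 1).hasSum.add (hG' 4).hasSum).neg

theorem mul_deriv_inv_tprod_rrFactor {q : ℂ} (hq : ‖q‖ < 1) :
    q * deriv (fun z => (∏' n, rrFactor n z)⁻¹) q =
      (∑' n, pmOneSigma n * q ^ n) * (∏' n, rrFactor n q)⁻¹ := by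
  have hne := tprod_rrFactor_ne_zero hq
  have hdiff := differentiableAt_tprod_rrFactor hq
  rcases eq_or_ne q 0 with rfl | hq0
  · have h (n : ℕ) : pmOneSigma n * 0 ^ n = 0 := by
      rcases n with _ | n <;> simp [pmOneSigma]
    simp [h]
  obtain ⟨r, hqr, hr⟩ := exists_between hq
  have hsum := hasSum_mul_logDeriv_rrFactor hq
  have hlog := logDeriv_tprod_eq_tsum Metric.isOpen_ball (mem_ball_zero_iff.mpr hqr)
    (rrFactor_ne_zero hq) (fun n => (differentiable_rrFactor n).differentiableOn)
    ((summable_mul_left_iff hq0).mp hsum.summable)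
    (multipliableLocallyUniformlyOn_rrFactor ((norm_nonneg q).trans hqr.le) hr) hne
  have hmul : q * logDeriv (fun z => ∏' n, rrFactor n z) q = -∑' n, pmOneSigma n * q ^ n := by
    rw [hlog, ← tsum_mul_left, hsum.tsum_eq]
  rw [logDeriv_apply] at hmul
  rw [deriv_fun_inv'' hdiff hne, eq_neg_iff_add_eq_zero.mp hmul |> eq_neg_of_add_eq_zero_right]
  field_simp

theorem tprod_inv_rrFactor {q : ℂ} (hq : ‖q‖ < 1) :
    ∏' n : ℕ, ((1 - q ^ (5 * n + 1)) * (1 - q ^ (5 * n + 4)))⁻¹ = (∏' n, rrFactor n q)⁻¹ := by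
  obtain ⟨r, hqr, hr⟩ := exists_between hq
  exact ((multipliableLocallyUniformlyOn_rrFactor ((norm_nonneg q).trans hqr.le) hr).multipliable
    (by simpa using hqr)).tprod_inv₀ (tprod_rrFactor_ne_zero hq)

theorem tsum_sum_divisors_succ {f : ℕ → ℂ} {k : ℕ} (hf : ∀ d, ‖f d‖ ≤ (d : ℝ) ^ k) {q : ℂ}
    (hq : ‖q‖ < 1) :
    ∑' n : ℕ, (∑ d ∈ (n + 1).divisors, f d) * q ^ (n + 1) =
      ∑' n : ℕ, (∑ d ∈ n.divisors, f d) * q ^ n := by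
  rw [(summable_norm_mul_pow (norm_sum_divisors_le hf) hq).of_norm.tsum_eq_zero_add]
  simp

theorem hasSum_mul_tsum_mul_pow {c e : ℕ → ℂ} {k l : ℕ} (hc : ∀ n, ‖c n‖ ≤ (n : ℝ) ^ k)
    (he : ∀ n, ‖e n‖ ≤ (n : ℝ) ^ l) {q : ℂ} (hq : ‖q‖ < 1) :
    HasSum (fun n => (∑ p ∈ antidiagonal n, c p.1 * e p.2) * q ^ n)
      ((∑' n, c n * q ^ n) * ∑' n, e n * q ^ n) := by
  have h (n : ℕ) : ∑ p ∈ antidiagonal n, c p.1 * q ^ p.1 * (e p.2 * q ^ p.2) =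
      (∑ p ∈ antidiagonal n, c p.1 * e p.2) * q ^ n := by
    rw [sum_mul]
    refine sum_congr rfl fun p hp => ?_
    rw [← HasAntidiagonal.mem_antidiagonal.mp hp, pow_add]
    ring
  have hs := summable_norm_sum_mul_antidiagonal_of_summable_norm
    (summable_norm_mul_pow hc hq) (summable_norm_mul_pow he hq)
  rw [tsum_mul_tsum_eq_tsum_sum_antidiagonal_of_summable_norm
    (summable_norm_mul_pow hc hq) (summable_norm_mul_pow he hq)]
  simp_rw [h] at hs ⊢
  exact hs.of_norm.hasSum

theorem tsum_pmOneSigma_riccati {q : ℂ} (hq : ‖q‖ < 1) :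
    ∑' n : ℕ, n * pmOneSigma n * q ^ n + (∑' n, pmOneSigma n * q ^ n) ^ 2 =
      (∑' n, pmOneSigma n * q ^ n) / 5 -
        4 * (∑' n : ℕ, (∑ d ∈ n.divisors, (d : ℂ)) * q ^ n) * ∑' n, pmOneSigma n * q ^ n +
        (∑' n : ℕ, (∑ d ∈ n.divisors, (d : ℂ)) * q ^ n +
          11 * ∑' n : ℕ, (∑ d ∈ n.divisors, (d : ℂ) ^ 3) * q ^ n) / 15 := by
  have hσ₁ := norm_sum_divisors_le (f := fun d => (d : ℂ)) (k := 1) (by simp)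
  have hσ₃ := norm_sum_divisors_le (f := fun d => (d : ℂ) ^ 3) (k := 3) (by simp)
  have hn (n : ℕ) : ‖n * pmOneSigma n‖ ≤ (n : ℝ) ^ 3 := by
    rw [norm_mul, Complex.norm_natCast, pow_succ']
    gcongr
    exact norm_pmOneSigma_le n
  have sA := (summable_norm_mul_pow norm_pmOneSigma_le hq).of_norm.hasSum
  have s₁ := (summable_norm_mul_pow hσ₁ hq).of_norm.hasSum
  have s₃ := (summable_norm_mul_pow hσ₃ hq).of_norm.hasSum
  have left := (summable_norm_mul_pow hn hq).of_norm.hasSum.add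
    (hasSum_mul_tsum_mul_pow norm_pmOneSigma_le norm_pmOneSigma_le hq)
  have right := ((sA.div_const 5).sub
    ((hasSum_mul_tsum_mul_pow hσ₁ norm_pmOneSigma_le hq).mul_left 4)).add
    ((s₁.add (s₃.mul_left 11)).div_const 15)
  rw [pow_two, mul_assoc 4]
  refine left.unique (right.congr_fun fun n => ?_)
  linear_combination q ^ n * pmOneSigma_convolution n

/-- The Rogers–Ramanujan product `L₂(q) = ∏_{n≥0} 1/((1-q^{5n+1})(1-q^{5n+4}))`
satisfies `(qd/dq)²F + (-1/5 + 4∑σ₁(n)qⁿ)(qd/dq)F - (1/15)(∑σ₁(n)qⁿ + 11∑σ₃(n)qⁿ)·F = 0`. -/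
theorem RR_product_L2_ODE (L₂ : ℂ → ℂ)
    (hL : L₂ = fun q : ℂ => ∏' n : ℕ, ((1 - q ^ (5 * n + 1)) * (1 - q ^ (5 * n + 4)))⁻¹)
    (D : (ℂ → ℂ) → (ℂ → ℂ)) (hD : D = fun F => fun q => q * deriv F q)
    (q : ℂ) (hq : ‖q‖ < 1) :
    D (D L₂) q
      + (-(1 / 5) + 4 * ∑' n : ℕ, (∑ d ∈ (n + 1).divisors, (d : ℂ)) * q ^ (n + 1)) * D L₂ q
      - 1 / 15 * ((∑' n : ℕ, (∑ d ∈ (n + 1).divisors, (d : ℂ)) * q ^ (n + 1))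
          + 11 * ∑' n : ℕ, (∑ d ∈ (n + 1).divisors, (d : ℂ) ^ 3) * q ^ (n + 1)) * L₂ q = 0 := by
  let P : ℂ → ℂ := fun z => (∏' n, rrFactor n z)⁻¹
  let A : ℂ → ℂ := fun z => ∑' n, pmOneSigma n * z ^ n
  have eventually_of_ball {F G : ℂ → ℂ} (h : ∀ z, ‖z‖ < 1 → F z = G z) {z : ℂ} (hz : ‖z‖ < 1) :
      F =ᶠ[nhds z] G :=
    Filter.eventuallyEq_of_mem (Metric.isOpen_ball.mem_nhds (mem_ball_zero_iff.mpr hz))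
      fun y hy => h y (mem_ball_zero_iff.mp hy)
  have hLP (z : ℂ) (hz : ‖z‖ < 1) : L₂ z = P z := by
    rw [hL]
    exact tprod_inv_rrFactor hz
  have hDL (z : ℂ) (hz : ‖z‖ < 1) : D L₂ z = A z * P z := by
    rw [hD]
    simp only [(eventually_of_ball hLP hz).deriv_eq]
    exact mul_deriv_inv_tprod_rrFactor hz
  have hA := hasDerivAt_tsum_mul_pow norm_pmOneSigma_le hq
  have hP : DifferentiableAt ℂ P q :=
    (differentiableAt_tprod_rrFactor hq).inv (tprod_rrFactor_ne_zero hq)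
  have hDDL : D (D L₂) q = (∑' n : ℕ, n * pmOneSigma n * q ^ n + A q ^ 2) * P q := by
    have hDF : D (D L₂) q = q * deriv (D L₂) q := by rw [hD]
    have hderiv : deriv (fun z => A z * P z) q = deriv A q * P q + A q * deriv P q :=
      deriv_fun_mul hA.differentiableAt hP
    rw [hDF, (eventually_of_ball hDL hq).deriv_eq, hderiv,
      ← mul_deriv_tsum_mul_pow norm_pmOneSigma_le hq]
    linear_combination A q * mul_deriv_inv_tprod_rrFactor hq
  rw [hDDL, hDL q hq, hLP q hq, tsum_sum_divisors_succ (k := 1) (by simp) hq,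
    tsum_sum_divisors_succ (f := fun d => (d : ℂ) ^ 3) (k := 3) (by simp) hq]
  linear_combination P q * tsum_pmOneSigma_riccati hq
end

section
/- Let a(n) denote the number of partitions of n into parts congruent to ±2 mod 5. Then for every n ≥ 1, (15n² + 3n)·a(n) = 11·∑_{k=0}^{n-1} (σ₃(n-k) - σ₁(n-k))·a(k) - 60·∑_{k=0}^{n-1} k·a(k)·σ₁(n-k). -/
open scoped BigOperators

/-- `a n` = number of partitions of `n` into parts `≡ ±2 (mod 5)`. -/
noncomputable def mod5PartCount (n : ℕ) : ℕ :=
  Nat.card {p : n.Partition // ∀ x ∈ p.parts, x % 5 = 2 ∨ x % 5 = 3}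

/-- The admissible parts: positive integers `≡ ±2 (mod 5)`. -/
abbrev IsMod5Part (d : ℕ) : Prop := d % 5 = 2 ∨ d % 5 = 3

/-- The part `d` itself when it is admissible, and `0` otherwise. -/
def mod5Weight (d : ℕ) : ℤ := if IsMod5Part d then (d : ℤ) else 0

/-- The quadratic form used on the residue classes `r`, `s` modulo `5` by `hexForm`. -/
def hexFormAux : ℕ → ℕ → ℤ → ℤ → ℤ
  | 0, 1, a, _ | 0, 4, a, _ => -2 * a ^ 2
  | 1, 0, _, b | 4, 0, _, b => -2 * b ^ 2
  | 1, 1, a, b | 4, 4, a, b => -2 * (a - b) ^ 2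
  | 0, 2, a, b | 0, 3, a, b => -8 * a ^ 2 + 5 * a * b - 5 * b ^ 2
  | 2, 0, a, b | 3, 0, a, b => -5 * a ^ 2 + 5 * a * b - 8 * b ^ 2
  | 2, 2, a, b | 3, 3, a, b => -8 * a ^ 2 + 11 * a * b - 8 * b ^ 2
  | 1, 2, a, b | 4, 3, a, b => -2 * (2 * a - b) ^ 2
  | 2, 1, a, b | 3, 4, a, b => -2 * (a - 2 * b) ^ 2
  | 1, 4, a, b | 4, 1, a, b => -2 * (a + b) ^ 2
  | 1, 3, a, b | 4, 2, a, b => -8 * a ^ 2 + 2 * a * b - 2 * b ^ 2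
  | 2, 4, a, b | 3, 1, a, b => -2 * a ^ 2 + 2 * a * b - 8 * b ^ 2
  | 2, 3, a, b | 3, 2, a, b => -8 * a ^ 2 + 14 * a * b - 8 * b ^ 2
  | _, _, _, _ => 0

/-- A function on the hexagonal lattice, invariant under its twelve symmetries, that is a quadratic
form on each class modulo `5`. -/
def hexForm (a b : ℕ) : ℤ := hexFormAux (a % 5) (b % 5) a b

theorem mod_five_cases (a : ℕ) :
    a % 5 = 0 ∨ a % 5 = 1 ∨ a % 5 = 2 ∨ a % 5 = 3 ∨ a % 5 = 4 := by omega

theorem hexForm_comm (a b : ℕ) : hexForm a b = hexForm b a := by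
  rcases mod_five_cases a with ha | ha | ha | ha | ha <;>
  rcases mod_five_cases b with hb | hb | hb | hb | hb <;>
  simp only [hexForm, ha, hb, hexFormAux] <;> ring

theorem hexForm_self_add_comm (a b : ℕ) : hexForm a (a + b) = hexForm b (b + a) := by
  have hab := Nat.add_mod a b 5
  have hba := Nat.add_mod b a 5
  rcases mod_five_cases a with ha | ha | ha | ha | ha <;>
  rcases mod_five_cases b with hb | hb | hb | hb | hb <;>
  simp only [ha, hb, Nat.reduceAdd, Nat.reduceMod] at hab hba <;>
  simp only [hexForm, ha, hb, hab, hba, hexFormAux] <;> push_cast <;> ring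

theorem hexForm_sub (a b : ℕ) : hexForm a b - hexForm a (a + b) =
    5 * (mod5Weight a * mod5Weight b + 2 * (a * mod5Weight b) + 2 * (mod5Weight a * b)) := by
  have hab := Nat.add_mod a b 5
  rcases mod_five_cases a with ha | ha | ha | ha | ha <;>
  rcases mod_five_cases b with hb | hb | hb | hb | hb <;>
  simp only [ha, hb, Nat.reduceAdd, Nat.reduceMod] at hab <;>
  simp [hexForm, ha, hb, hab, hexFormAux, mod5Weight, IsMod5Part] <;> ring

theorem hexForm_self (d : ℕ) : hexForm d d = -5 * (d * mod5Weight d) := by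
  rcases mod_five_cases d with h | h | h | h | h <;>
  simp [hexForm, h, hexFormAux, mod5Weight, IsMod5Part] <;> ring

theorem hexForm_zero_left (d : ℕ) : hexForm 0 d = -5 * (d * mod5Weight d) := by
  rcases mod_five_cases d with h | h | h | h | h <;>
  simp [hexForm, h, hexFormAux, mod5Weight, IsMod5Part] <;> ring

theorem sum_range_five_mul (f : ℕ → ℤ) (m : ℕ) : ∑ a ∈ Finset.range (5 * m), f a =
    ∑ i ∈ Finset.range m, ∑ r ∈ Finset.range 5, f (5 * i + r) := by
  induction m with
  | zero => simp
  | succ m ih => rw [Finset.sum_range_succ, ← ih, mul_add, mul_one, Finset.sum_range_add]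

theorem six_mul_sum_range_quadratic (A B C : ℤ) (m : ℕ) :
    6 * ∑ i ∈ Finset.range m, (A * i ^ 2 + B * i + C) =
      A * (m * (m - 1) * (2 * m - 1)) + 3 * B * (m * (m - 1)) + 6 * C * m := by
  induction m with
  | zero => simp
  | succ m ih => rw [Finset.sum_range_succ, mul_add, ih]; push_cast; ring

theorem three_mul_sum_range_hexForm (d : ℕ) : 3 * ∑ a ∈ Finset.range d, hexForm a d =
    3 * mod5Weight d - 11 * ((d : ℤ) ^ 3 - d) := by
  have key (A B C : ℤ) (m s : ℕ) (h : ∀ i : ℕ,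
      ∑ r ∈ Finset.range 5, hexForm (5 * i + r) (5 * m + s) = A * i ^ 2 + B * i + C) :
      6 * ∑ a ∈ Finset.range (5 * m + s), hexForm a (5 * m + s) =
        A * (m * (m - 1) * (2 * m - 1)) + 3 * B * (m * (m - 1)) + 6 * C * m +
          6 * ∑ r ∈ Finset.range s, hexForm (5 * m + r) (5 * m + s) := by
    rw [Finset.sum_range_add, mul_add, sum_range_five_mul, Finset.sum_congr rfl fun i _ ↦ h i,
      six_mul_sum_range_quadratic]
  have hdiv := Nat.div_add_mod d 5
  generalize d / 5 = m at hdiv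
  suffices h : 6 * ∑ a ∈ Finset.range d, hexForm a d =
      6 * mod5Weight d - 22 * ((d : ℤ) ^ 3 - d) by linarith
  rcases mod_five_cases d with h | h | h | h | h <;> rw [h] at hdiv <;> subst hdiv
  · rw [key (-250) (250 * m - 250) (-500 * m ^ 2 + 125 * m - 65)]
    · simp [mod5Weight, IsMod5Part]
      ring
    · intro i
      simp [Finset.sum_range_succ, hexForm, hexFormAux, Nat.add_mod]
      ring
  · rw [key (-250) (250 * m - 150) (-500 * m ^ 2 - 150 * m - 70)]
    · simp [mod5Weight, IsMod5Part, hexForm, hexFormAux, Nat.add_mod]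
      ring
    · intro i
      simp [Finset.sum_range_succ, hexForm, hexFormAux, Nat.add_mod]
      ring
  · rw [key (-1000) (1000 * m - 400) (-625 * m ^ 2 - 100 * m - 180)]
    · simp [mod5Weight, IsMod5Part, Finset.sum_range_succ, hexForm, hexFormAux, Nat.add_mod]
      ring
    · intro i
      simp [Finset.sum_range_succ, hexForm, hexFormAux, Nat.add_mod]
      ring
  · rw [key (-1000) (1000 * m - 200) (-625 * m ^ 2 - 275 * m - 180)]
    · simp [mod5Weight, IsMod5Part, Finset.sum_range_succ, hexForm, hexFormAux, Nat.add_mod]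
      ring
    · intro i
      simp [Finset.sum_range_succ, hexForm, hexFormAux, Nat.add_mod]
      ring
  · rw [key (-250) (250 * m) (-500 * m ^ 2 - 600 * m - 220)]
    · simp [mod5Weight, IsMod5Part, Finset.sum_range_succ, hexForm, hexFormAux, Nat.add_mod]
      ring
    · intro i
      simp [Finset.sum_range_succ, hexForm, hexFormAux, Nat.add_mod]
      ring

/-- The pairs `((a, x), (b, y))` of positive integers with `a * x + b * y = n`. -/
def liouvilleQuadruples (n : ℕ) : Finset ((ℕ × ℕ) × ℕ × ℕ) :=
  ((Finset.Icc 1 n ×ˢ Finset.Icc 1 n) ×ˢ (Finset.Icc 1 n ×ˢ Finset.Icc 1 n)).filter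
    fun t ↦ t.1.1 * t.1.2 + t.2.1 * t.2.2 = n

theorem mem_liouvilleQuadruples {n a x b y : ℕ} : ((a, x), (b, y)) ∈ liouvilleQuadruples n ↔
    0 < a ∧ 0 < x ∧ 0 < b ∧ 0 < y ∧ a * x + b * y = n := by
  simp only [liouvilleQuadruples, Finset.mem_filter, Finset.mem_product, Finset.mem_Icc]
  constructor
  · grind
  · rintro ⟨ha, hx, hb, hy, rfl⟩
    refine ⟨⟨⟨⟨ha, ?_⟩, hx, ?_⟩, ⟨hb, ?_⟩, hy, ?_⟩, rfl⟩ <;> nlinarith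

theorem sum_antidiagonal_divisors_mul (f g : ℕ → ℤ) (n : ℕ) :
    ∑ p ∈ Finset.HasAntidiagonal.antidiagonal n,
        (∑ a ∈ p.1.divisors, f a) * ∑ b ∈ p.2.divisors, g b =
      ∑ t ∈ liouvilleQuadruples n, f t.1.1 * g t.2.1 := by
  have h (p : ℕ × ℕ) : (∑ a ∈ p.1.divisors, f a) * ∑ b ∈ p.2.divisors, g b =
      ∑ t ∈ p.1.divisorsAntidiagonal ×ˢ p.2.divisorsAntidiagonal, f t.1.1 * g t.2.1 := by
    rw [← Nat.sum_divisorsAntidiagonal (fun a _ ↦ f a),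
      ← Nat.sum_divisorsAntidiagonal (fun b _ ↦ g b), Finset.sum_mul_sum, Finset.sum_product]
  rw [Finset.sum_congr rfl fun p _ ↦ h p, Finset.sum_sigma']
  refine Finset.sum_nbij' (fun s ↦ s.2) (fun t ↦ ⟨(t.1.1 * t.1.2, t.2.1 * t.2.2), t⟩)
    ?_ ?_ ?_ ?_ ?_
  · rintro ⟨⟨i, j⟩, ⟨a, x⟩, b, y⟩ h
    simp only [Finset.mem_sigma, Finset.HasAntidiagonal.mem_antidiagonal, Finset.mem_product,
      Nat.mem_divisorsAntidiagonal] at h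
    obtain ⟨h1, ⟨rfl, h2⟩, rfl, h3⟩ := h
    simp only [mul_ne_zero_iff] at h2 h3
    exact mem_liouvilleQuadruples.2 ⟨by omega, by omega, by omega, by omega, h1⟩
  · rintro ⟨⟨a, x⟩, b, y⟩ h
    obtain ⟨h1, h2, h3, h4, h5⟩ := mem_liouvilleQuadruples.1 h
    simp only [Finset.mem_sigma, Finset.HasAntidiagonal.mem_antidiagonal, Finset.mem_product,
      Nat.mem_divisorsAntidiagonal]
    exact ⟨h5, ⟨trivial, by positivity⟩, trivial, by positivity⟩
  · rintro ⟨⟨i, j⟩, ⟨a, x⟩, b, y⟩ h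
    simp only [Finset.mem_sigma, Finset.HasAntidiagonal.mem_antidiagonal, Finset.mem_product,
      Nat.mem_divisorsAntidiagonal] at h
    obtain ⟨h1, ⟨rfl, h2⟩, rfl, h3⟩ := h
    rfl
  · intros; rfl
  · intros; rfl

theorem sum_liouvilleQuadruples_lt_comm (g : ℕ → ℕ → ℤ) (n : ℕ) (r : ℕ × ℕ → ℕ) :
    ∑ t ∈ liouvilleQuadruples n with r t.2 < r t.1, g t.1.1 t.2.1 =
      ∑ t ∈ liouvilleQuadruples n with r t.1 < r t.2, g t.2.1 t.1.1 := by
  refine Finset.sum_nbij' Prod.swap Prod.swap ?_ ?_ ?_ ?_ ?_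
  · rintro ⟨⟨a, x⟩, b, y⟩ h
    simp only [Finset.mem_filter, mem_liouvilleQuadruples, Prod.swap] at h ⊢
    omega
  · rintro ⟨⟨a, x⟩, b, y⟩ h
    simp only [Finset.mem_filter, mem_liouvilleQuadruples, Prod.swap] at h ⊢
    omega
  all_goals intros; rfl

theorem sum_liouvilleQuadruples_split (g : ℕ → ℕ → ℤ) (hg : ∀ a b, g a b = g b a) (n : ℕ)
    (r : ℕ × ℕ → ℕ) :
    ∑ t ∈ liouvilleQuadruples n, g t.1.1 t.2.1 =
      2 * ∑ t ∈ liouvilleQuadruples n with r t.2 < r t.1, g t.1.1 t.2.1 +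
        ∑ t ∈ liouvilleQuadruples n with r t.1 = r t.2, g t.1.1 t.2.1 := by
  have h : ∑ t ∈ liouvilleQuadruples n with r t.2 < r t.1, g t.1.1 t.2.1 =
      ∑ t ∈ liouvilleQuadruples n with r t.1 < r t.2, g t.1.1 t.2.1 := by
    rw [sum_liouvilleQuadruples_lt_comm]
    exact Finset.sum_congr rfl fun t _ ↦ hg _ _
  rw [two_mul]
  nth_rewrite 2 [h]
  simp only [Finset.sum_filter, ← Finset.sum_add_distrib]
  refine Finset.sum_congr rfl fun t _ ↦ ?_
  rcases lt_trichotomy (r t.1) (r t.2) with h | h | h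
  · simp [h, h.not_gt, h.ne]
  · simp [h]
  · simp [h, h.not_gt, h.ne']

theorem sum_liouvilleQuadruples_shear (f : ℕ → ℕ → ℤ) (n : ℕ) :
    ∑ t ∈ liouvilleQuadruples n with t.1.1 < t.2.1, f t.1.1 t.2.1 =
      ∑ t ∈ liouvilleQuadruples n with t.2.2 < t.1.2, f t.1.1 (t.1.1 + t.2.1) := by
  refine Finset.sum_nbij' (fun t ↦ ((t.1.1, t.1.2 + t.2.2), (t.2.1 - t.1.1, t.2.2)))
    (fun t ↦ ((t.1.1, t.1.2 - t.2.2), (t.1.1 + t.2.1, t.2.2))) ?_ ?_ ?_ ?_ ?_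
  · rintro ⟨⟨a, x⟩, b, y⟩ h
    simp only [Finset.mem_filter, mem_liouvilleQuadruples] at h ⊢
    obtain ⟨⟨ha, hx, hb, hy, h⟩, hlt⟩ := h
    obtain ⟨c, rfl⟩ := Nat.exists_eq_add_of_lt hlt
    refine ⟨⟨ha, by omega, by omega, hy, ?_⟩, by omega⟩
    rw [← h, add_assoc, Nat.add_sub_cancel_left]
    ring
  · rintro ⟨⟨a, x⟩, b, y⟩ h
    simp only [Finset.mem_filter, mem_liouvilleQuadruples] at h ⊢
    obtain ⟨⟨ha, hx, hb, hy, h⟩, hlt⟩ := h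
    obtain ⟨c, rfl⟩ := Nat.exists_eq_add_of_lt hlt
    refine ⟨⟨ha, by omega, by omega, hy, ?_⟩, by omega⟩
    rw [← h, add_assoc, Nat.add_sub_cancel_left]
    ring
  · rintro ⟨⟨a, x⟩, b, y⟩ h
    simp only [Finset.mem_filter] at h
    ext <;> dsimp only <;> omega
  · rintro ⟨⟨a, x⟩, b, y⟩ h
    simp only [Finset.mem_filter] at h
    ext <;> dsimp only <;> omega
  · rintro ⟨⟨a, x⟩, b, y⟩ h
    simp only [Finset.mem_filter] at h ⊢
    rw [Nat.add_sub_cancel' h.2.le]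

theorem sum_liouvilleQuadruples_fst_eq (f : ℕ → ℕ → ℤ) (n : ℕ) :
    ∑ t ∈ liouvilleQuadruples n with t.1.1 = t.2.1, f t.1.1 t.2.1 =
      ∑ p ∈ n.divisorsAntidiagonal, ((p.2 : ℤ) - 1) * f p.1 p.1 := by
  have h : ∀ p ∈ n.divisorsAntidiagonal,
      ((p.2 : ℤ) - 1) * f p.1 p.1 = ∑ _x ∈ Finset.Ico 1 p.2, f p.1 p.1 := by
    intro p hp
    have := Nat.pos_of_ne_zero (Nat.right_ne_zero_of_mem_divisorsAntidiagonal hp)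
    simp [Nat.cast_sub (Nat.succ_le_of_lt this)]
  rw [Finset.sum_congr rfl h, Finset.sum_sigma']
  refine Finset.sum_nbij' (fun t ↦ ⟨(t.1.1, t.1.2 + t.2.2), t.1.2⟩)
    (fun s ↦ ((s.1.1, s.2), (s.1.1, s.1.2 - s.2))) ?_ ?_ ?_ ?_ ?_
  · rintro ⟨⟨a, x⟩, b, y⟩ h
    simp only [Finset.mem_filter, mem_liouvilleQuadruples, Finset.mem_sigma,
      Nat.mem_divisorsAntidiagonal, Finset.mem_Ico] at h ⊢
    obtain ⟨⟨ha, hx, hb, hy, rfl⟩, rfl⟩ := h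
    exact ⟨⟨by ring, by positivity⟩, by omega, by omega⟩
  · rintro ⟨⟨a, e⟩, x⟩ h
    simp only [Finset.mem_filter, mem_liouvilleQuadruples, Finset.mem_sigma,
      Nat.mem_divisorsAntidiagonal, Finset.mem_Ico] at h ⊢
    obtain ⟨⟨rfl, h1⟩, h2, h3⟩ := h
    have ha : 0 < a := Nat.pos_of_ne_zero (left_ne_zero_of_mul h1)
    refine ⟨⟨ha, by omega, ha, by omega, ?_⟩, trivial⟩
    rw [← mul_add, Nat.add_sub_cancel' h3.le]
  · rintro ⟨⟨a, x⟩, b, y⟩ h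
    simp only [Finset.mem_filter] at h
    ext <;> dsimp only <;> omega
  · rintro ⟨⟨a, e⟩, x⟩ h
    simp only [Finset.mem_sigma, Finset.mem_Ico] at h ⊢
    rw [Nat.add_sub_cancel' h.2.2.le]
  · rintro ⟨⟨a, x⟩, b, y⟩ h
    simp only [Finset.mem_filter] at h ⊢
    rw [h.2]

theorem sum_liouvilleQuadruples_snd_eq (f : ℕ → ℕ → ℤ) (n : ℕ) :
    ∑ t ∈ liouvilleQuadruples n with t.1.2 = t.2.2, f t.1.1 (t.1.1 + t.2.1) =
      ∑ p ∈ n.divisorsAntidiagonal, ∑ a ∈ Finset.Ico 1 p.1, f a p.1 := by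
  rw [Finset.sum_sigma']
  refine Finset.sum_nbij' (fun t ↦ ⟨(t.1.1 + t.2.1, t.1.2), t.1.1⟩)
    (fun s ↦ ((s.2, s.1.2), (s.1.1 - s.2, s.1.2))) ?_ ?_ ?_ ?_ ?_
  · rintro ⟨⟨a, x⟩, b, y⟩ h
    simp only [Finset.mem_filter, mem_liouvilleQuadruples, Finset.mem_sigma,
      Nat.mem_divisorsAntidiagonal, Finset.mem_Ico] at h ⊢
    obtain ⟨⟨ha, hx, hb, hy, rfl⟩, rfl⟩ := h
    exact ⟨⟨by ring, by positivity⟩, by omega, by omega⟩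
  · rintro ⟨⟨d, x⟩, a⟩ h
    simp only [Finset.mem_filter, mem_liouvilleQuadruples, Finset.mem_sigma,
      Nat.mem_divisorsAntidiagonal, Finset.mem_Ico] at h ⊢
    obtain ⟨⟨rfl, h1⟩, h2, h3⟩ := h
    have hx : 0 < x := Nat.pos_of_ne_zero (right_ne_zero_of_mul h1)
    refine ⟨⟨by omega, hx, by omega, hx, ?_⟩, trivial⟩
    rw [← add_mul, Nat.add_sub_cancel' h3.le]
  · rintro ⟨⟨a, x⟩, b, y⟩ h
    simp only [Finset.mem_filter] at h
    ext <;> dsimp only <;> omega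
  · rintro ⟨⟨d, x⟩, a⟩ h
    simp only [Finset.mem_sigma, Finset.mem_Ico] at h ⊢
    rw [Nat.add_sub_cancel' h.2.2.le]
  · intros; rfl

/-- A Liouville-type identity: for `f` invariant under the symmetries of the hexagonal lattice, the
sum of `f a b - f a (a + b)` over `a * x + b * y = n` reduces to sums over the divisors of `n`. -/
theorem sum_liouvilleQuadruples_sub (f : ℕ → ℕ → ℤ) (hf : ∀ a b, f a b = f b a)
    (hf' : ∀ a b, f a (a + b) = f b (b + a)) (n : ℕ) :
    ∑ t ∈ liouvilleQuadruples n, (f t.1.1 t.2.1 - f t.1.1 (t.1.1 + t.2.1)) =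
      ∑ p ∈ n.divisorsAntidiagonal,
        (((p.2 : ℤ) - 1) * f p.1 p.1 - ∑ a ∈ Finset.Ico 1 p.1, f a p.1) := by
  have h₁ := sum_liouvilleQuadruples_split f hf n Prod.fst
  have h₂ := sum_liouvilleQuadruples_split (fun a b ↦ f a (a + b)) hf' n Prod.snd
  have h₃ : ∑ t ∈ liouvilleQuadruples n with t.2.1 < t.1.1, f t.1.1 t.2.1 =
      ∑ t ∈ liouvilleQuadruples n with t.2.2 < t.1.2, f t.1.1 (t.1.1 + t.2.1) := by
    rw [sum_liouvilleQuadruples_lt_comm f n Prod.fst, ← sum_liouvilleQuadruples_shear]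
    exact Finset.sum_congr rfl fun t _ ↦ hf _ _
  rw [Finset.sum_sub_distrib, Finset.sum_sub_distrib, h₁, h₂, h₃, sum_liouvilleQuadruples_fst_eq,
    sum_liouvilleQuadruples_snd_eq]
  ring

theorem Nat.Partition.count_mul_le {n : ℕ} (p : n.Partition) (d : ℕ) :
    p.parts.count d * d ≤ n := by
  obtain ⟨u, hu⟩ := Multiset.le_iff_exists_add.1
    (Multiset.le_count_iff_replicate_le.1 (le_refl (p.parts.count d)))
  have h := congrArg Multiset.sum hu
  rw [Multiset.sum_add, Multiset.sum_replicate, p.parts_sum, smul_eq_mul] at h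
  omega

theorem mod5PartCount_eq_card_restricted (n : ℕ) :
    mod5PartCount n = (Nat.Partition.restricted n IsMod5Part).card := by
  rw [mod5PartCount, Nat.card_eq_fintype_card, Fintype.card_subtype]
  rfl

theorem card_restricted_le_count (P : ℕ → Prop) [DecidablePred P] {n d j : ℕ} (hd : 0 < d)
    (hP : P d) (hn : d * j ≤ n) :
    ((Nat.Partition.restricted n P).filter fun p ↦ j ≤ p.parts.count d).card =
      (Nat.Partition.restricted (n - d * j) P).card := by
  refine Finset.card_bij'
    (fun p hp ↦ ⟨p.parts - Multiset.replicate j d, fun hi ↦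
      p.parts_pos (Multiset.mem_of_le (Multiset.sub_le_self _ _) hi), ?_⟩)
    (fun q _ ↦ ⟨q.parts + Multiset.replicate j d, fun hi ↦ ?_, ?_⟩) ?_ ?_ ?_ ?_
  · have hle := Multiset.le_count_iff_replicate_le.1 (Finset.mem_filter.1 hp).2
    have h := congrArg Multiset.sum (Multiset.sub_add_cancel hle)
    rw [Multiset.sum_add, Multiset.sum_replicate, p.parts_sum, smul_eq_mul, mul_comm] at h
    omega
  · rcases Multiset.mem_add.1 hi with hi | hi
    · exact q.parts_pos hi
    · exact Multiset.eq_of_mem_replicate hi ▸ hd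
  · rw [Multiset.sum_add, Multiset.sum_replicate, q.parts_sum, smul_eq_mul, mul_comm j d]
    omega
  · intro p hp
    simp only [Nat.Partition.restricted, Finset.mem_filter, Finset.mem_univ, true_and] at hp ⊢
    exact fun i hi ↦ hp.1 i (Multiset.mem_of_le (Multiset.sub_le_self _ _) hi)
  · intro q hq
    simp only [Nat.Partition.restricted, Finset.mem_filter, Finset.mem_univ, true_and] at hq ⊢
    refine ⟨fun i hi ↦ ?_, by simp⟩
    rcases Multiset.mem_add.1 hi with hi | hi
    · exact hq i hi
    · exact Multiset.eq_of_mem_replicate hi ▸ hP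
  · intro p hp
    have hle := Multiset.le_count_iff_replicate_le.1 (Finset.mem_filter.1 hp).2
    exact Nat.Partition.ext (Multiset.sub_add_cancel hle)
  · intro q _
    exact Nat.Partition.ext (Multiset.add_sub_cancel_right ..)

theorem card_restricted_le_count_eq_zero (P : ℕ → Prop) [DecidablePred P] {n d j : ℕ}
    (hj : 0 < j) (h : ¬ (P d ∧ d * j ≤ n)) :
    ((Nat.Partition.restricted n P).filter fun p ↦ j ≤ p.parts.count d).card = 0 := by
  rw [Finset.card_eq_zero, Finset.filter_eq_empty_iff]
  intro p hp hle
  simp only [Nat.Partition.restricted, Finset.mem_filter, Finset.mem_univ, true_and] at hp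
  refine h ⟨hp d (Multiset.count_pos.1 (hj.trans_le hle)), ?_⟩
  rw [mul_comm]
  exact (Nat.mul_le_mul_right d hle).trans (p.count_mul_le d)

theorem Nat.Partition.sum_count_mul {n : ℕ} (p : n.Partition) :
    ∑ d ∈ Finset.Icc 1 n, ∑ j ∈ Finset.Icc 1 n, (if j ≤ p.parts.count d then d else 0) = n := by
  have hd : ∀ d ∈ Finset.Icc 1 n, ∑ j ∈ Finset.Icc 1 n,
      (if j ≤ p.parts.count d then d else 0) = p.parts.count d * d := by
    intro d hd
    have hle : p.parts.count d ≤ n :=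
      (Nat.le_mul_of_pos_right _ (Finset.mem_Icc.1 hd).1).trans (p.count_mul_le d)
    rw [← Finset.sum_filter, Finset.sum_const, smul_eq_mul]
    congr 1
    have : (Finset.Icc 1 n).filter (fun j ↦ j ≤ p.parts.count d) =
        Finset.Icc 1 (p.parts.count d) := by
      ext j
      simp only [Finset.mem_filter, Finset.mem_Icc]
      omega
    rw [this, Nat.card_Icc, Nat.add_sub_cancel]
  rw [Finset.sum_congr rfl hd]
  conv_rhs => rw [← p.parts_sum, Finset.sum_multiset_count]
  symm
  refine Finset.sum_subset (fun d hd ↦ ?_) fun d _ hd ↦ ?_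
  · rw [Multiset.mem_toFinset] at hd
    exact Finset.mem_Icc.2 ⟨p.parts_pos hd, p.le_of_mem_parts hd⟩
  · rw [Multiset.mem_toFinset] at hd
    simp [Multiset.count_eq_zero.2 hd]

theorem mul_mod5PartCount (n : ℕ) : (n : ℤ) * mod5PartCount n =
    ∑ k ∈ Finset.range n, (∑ d ∈ (n - k).divisors, mod5Weight d) * mod5PartCount k := by
  have h₁ : n * mod5PartCount n = ∑ d ∈ Finset.Icc 1 n, ∑ j ∈ Finset.Icc 1 n,
      if IsMod5Part d ∧ d * j ≤ n then d * mod5PartCount (n - d * j) else 0 := by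
    calc n * mod5PartCount n
      _ = ∑ p ∈ Nat.Partition.restricted n IsMod5Part, ∑ d ∈ Finset.Icc 1 n,
            ∑ j ∈ Finset.Icc 1 n, if j ≤ p.parts.count d then d else 0 := by
          rw [Finset.sum_congr rfl fun p _ ↦ p.sum_count_mul, Finset.sum_const, smul_eq_mul,
            mul_comm, mod5PartCount_eq_card_restricted]
      _ = _ := by
          rw [Finset.sum_comm]
          refine Finset.sum_congr rfl fun d hd ↦ ?_
          rw [Finset.sum_comm]
          refine Finset.sum_congr rfl fun j hj ↦ ?_
          rw [← Finset.sum_filter, Finset.sum_const, smul_eq_mul]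
          split_ifs with h
          · rw [card_restricted_le_count IsMod5Part (Finset.mem_Icc.1 hd).1 h.1 h.2,
              mod5PartCount_eq_card_restricted, mul_comm]
          · rw [card_restricted_le_count_eq_zero IsMod5Part (Finset.mem_Icc.1 hj).1 h, zero_mul]
  have h₂ (k : ℕ) : (∑ d ∈ (n - k).divisors, mod5Weight d) * mod5PartCount k =
      ∑ p ∈ (n - k).divisorsAntidiagonal, mod5Weight p.1 * mod5PartCount k := by
    rw [← Nat.sum_divisorsAntidiagonal (fun d _ ↦ mod5Weight d), Finset.sum_mul]
  rw [Finset.sum_congr rfl fun k _ ↦ h₂ k, Finset.sum_sigma', ← Nat.cast_mul, h₁,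
    ← Finset.sum_product', Nat.cast_sum]
  have h₃ : ∀ p ∈ Finset.Icc 1 n ×ˢ Finset.Icc 1 n,
      ((if IsMod5Part p.1 ∧ p.1 * p.2 ≤ n then p.1 * mod5PartCount (n - p.1 * p.2) else 0 : ℕ) : ℤ)
        = if p.1 * p.2 ≤ n then mod5Weight p.1 * mod5PartCount (n - p.1 * p.2) else 0 := by
    intro p _
    by_cases h : IsMod5Part p.1 <;> by_cases h' : p.1 * p.2 ≤ n <;> simp [mod5Weight, h, h']
  rw [Finset.sum_congr rfl h₃, ← Finset.sum_filter]
  refine Finset.sum_nbij' (fun p ↦ ⟨n - p.1 * p.2, p⟩) (fun s ↦ s.2) ?_ ?_ ?_ ?_ ?_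
  · rintro ⟨d, j⟩ h
    simp only [Finset.mem_filter, Finset.mem_product, Finset.mem_Icc, Finset.mem_sigma,
      Finset.mem_range, Nat.mem_divisorsAntidiagonal] at h ⊢
    have : 0 < d * j := Nat.mul_pos h.1.1.1 h.1.2.1
    omega
  · rintro ⟨k, d, j⟩ h
    simp only [Finset.mem_filter, Finset.mem_product, Finset.mem_Icc, Finset.mem_sigma,
      Finset.mem_range, Nat.mem_divisorsAntidiagonal] at h ⊢
    obtain ⟨h1, h2, h3⟩ := h
    have h4 : d * j ≠ 0 := h2 ▸ h3
    have hd : 0 < d := Nat.pos_of_ne_zero (left_ne_zero_of_mul h4)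
    have hj : 0 < j := Nat.pos_of_ne_zero (right_ne_zero_of_mul h4)
    have h5 := Nat.le_mul_of_pos_right d hj
    have h6 := Nat.le_mul_of_pos_left j hd
    omega
  · intros; rfl
  · rintro ⟨k, d, j⟩ h
    simp only [Finset.mem_sigma, Finset.mem_range, Nat.mem_divisorsAntidiagonal] at h
    obtain ⟨h1, h2, h3⟩ := h
    rw [show k = n - d * j by omega]
  · intros; rfl

theorem fifteen_mul_sum_divisors_mul (n : ℕ) :
    15 * ∑ p ∈ Finset.HasAntidiagonal.antidiagonal n,
        (∑ a ∈ p.1.divisors, mod5Weight a) * ∑ b ∈ p.2.divisors, mod5Weight b +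
      30 * ∑ p ∈ Finset.HasAntidiagonal.antidiagonal n,
        (∑ a ∈ p.1.divisors, (a : ℤ)) * ∑ b ∈ p.2.divisors, mod5Weight b +
      30 * ∑ p ∈ Finset.HasAntidiagonal.antidiagonal n,
        (∑ a ∈ p.1.divisors, mod5Weight a) * ∑ b ∈ p.2.divisors, (b : ℤ) =
    11 * (∑ d ∈ n.divisors, (d : ℤ) ^ 3 - ∑ d ∈ n.divisors, (d : ℤ)) -
      (15 * n + 3) * ∑ d ∈ n.divisors, mod5Weight d := by
  have h := sum_liouvilleQuadruples_sub hexForm hexForm_comm hexForm_self_add_comm n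
  have hL : 3 * ∑ t ∈ liouvilleQuadruples n,
      (hexForm t.1.1 t.2.1 - hexForm t.1.1 (t.1.1 + t.2.1)) =
      15 * ∑ t ∈ liouvilleQuadruples n, mod5Weight t.1.1 * mod5Weight t.2.1 +
      30 * ∑ t ∈ liouvilleQuadruples n, t.1.1 * mod5Weight t.2.1 +
      30 * ∑ t ∈ liouvilleQuadruples n, mod5Weight t.1.1 * t.2.1 := by
    simp only [hexForm_sub, Finset.mul_sum, ← Finset.sum_add_distrib]
    exact Finset.sum_congr rfl fun t _ ↦ by ring
  rw [sum_antidiagonal_divisors_mul, sum_antidiagonal_divisors_mul,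
    sum_antidiagonal_divisors_mul, ← hL, h, ← Nat.sum_divisorsAntidiagonal (fun d _ ↦ (d : ℤ) ^ 3),
    ← Nat.sum_divisorsAntidiagonal (fun d _ ↦ (d : ℤ)),
    ← Nat.sum_divisorsAntidiagonal (fun d _ ↦ mod5Weight d), ← Finset.sum_sub_distrib,
    Finset.mul_sum, Finset.mul_sum, Finset.mul_sum, ← Finset.sum_sub_distrib]
  refine Finset.sum_congr rfl fun ⟨d, e⟩ hp ↦ ?_
  obtain ⟨rfl, h0⟩ := Nat.mem_divisorsAntidiagonal.1 hp
  have hd : 0 < d := Nat.pos_of_ne_zero (left_ne_zero_of_mul h0)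
  have hs := three_mul_sum_range_hexForm d
  rw [Finset.range_eq_Ico, Finset.sum_eq_sum_Ico_succ_bot hd, hexForm_zero_left] at hs
  rw [hexForm_self]
  push_cast at hs ⊢
  linear_combination -hs

/-- The Lambert series `∑ (∑_{d ∣ n} f d) X ^ n`. -/
noncomputable def lambertSeries (f : ℕ → ℤ) : PowerSeries ℤ :=
  PowerSeries.mk fun n ↦ ∑ d ∈ n.divisors, f d

/-- The Euler derivation `X d/dX`. -/
noncomputable def eulerDerivation : Derivation ℤ (PowerSeries ℤ) (PowerSeries ℤ) :=
  (PowerSeries.X : PowerSeries ℤ) • PowerSeries.derivative ℤ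

theorem coeff_eulerDerivation (f : PowerSeries ℤ) (n : ℕ) :
    PowerSeries.coeff n (eulerDerivation f) = n * PowerSeries.coeff n f := by
  change PowerSeries.coeff n (PowerSeries.X * PowerSeries.derivative ℤ f) = _
  cases n with
  | zero => simp
  | succ n => simp [PowerSeries.coeff_succ_X_mul, PowerSeries.coeff_derivative, mul_comm]

theorem coeff_lambertSeries_mul (f : ℕ → ℤ) (g : PowerSeries ℤ) (n : ℕ) :
    PowerSeries.coeff n (lambertSeries f * g) =
      ∑ k ∈ Finset.range n, (∑ d ∈ (n - k).divisors, f d) * PowerSeries.coeff k g := by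
  rw [mul_comm, PowerSeries.coeff_mul, Finset.Nat.sum_antidiagonal_eq_sum_range_succ_mk,
    Finset.sum_range_succ]
  simp [lambertSeries, mul_comm]

theorem lambertSeries_mod5Weight_differential_equation :
    15 * eulerDerivation (lambertSeries mod5Weight) + 15 * lambertSeries mod5Weight ^ 2 +
        3 * lambertSeries mod5Weight =
      11 * (lambertSeries (fun d ↦ (d : ℤ) ^ 3) - lambertSeries (fun d ↦ (d : ℤ))) -
        60 * (lambertSeries (fun d ↦ (d : ℤ)) * lambertSeries mod5Weight) := by
  have h : 15 * (lambertSeries mod5Weight * lambertSeries mod5Weight) +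
      30 * (lambertSeries (fun d ↦ (d : ℤ)) * lambertSeries mod5Weight) +
      30 * (lambertSeries mod5Weight * lambertSeries (fun d ↦ (d : ℤ))) =
      11 * (lambertSeries (fun d ↦ (d : ℤ) ^ 3) - lambertSeries (fun d ↦ (d : ℤ))) -
        (15 * eulerDerivation (lambertSeries mod5Weight) + 3 * lambertSeries mod5Weight) := by
    ext n
    have h15 := fifteen_mul_sum_divisors_mul n
    simp only [← map_ofNat (PowerSeries.C (R := ℤ)), map_add, map_sub, PowerSeries.coeff_C_mul,
      coeff_eulerDerivation]
    simp only [PowerSeries.coeff_mul, lambertSeries, PowerSeries.coeff_mk]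
    rw [h15]
    ring
  linear_combination h

/-- The generating function of `mod5PartCount`. -/
noncomputable def mod5PartSeries : PowerSeries ℤ := PowerSeries.mk fun n ↦ (mod5PartCount n : ℤ)

theorem eulerDerivation_mod5PartSeries :
    eulerDerivation mod5PartSeries = lambertSeries mod5Weight * mod5PartSeries := by
  ext n
  simp only [coeff_eulerDerivation, coeff_lambertSeries_mul, mod5PartSeries, PowerSeries.coeff_mk]
  exact mul_mod5PartCount n

theorem mod5PartSeries_differential_equation :
    15 * eulerDerivation (eulerDerivation mod5PartSeries) + 3 * eulerDerivation mod5PartSeries =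
      11 * (lambertSeries (fun d ↦ (d : ℤ) ^ 3) * mod5PartSeries -
        lambertSeries (fun d ↦ (d : ℤ)) * mod5PartSeries) -
        60 * (lambertSeries (fun d ↦ (d : ℤ)) * eulerDerivation mod5PartSeries) := by
  rw [eulerDerivation_mod5PartSeries, Derivation.leibniz, eulerDerivation_mod5PartSeries]
  simp only [smul_eq_mul]
  linear_combination mod5PartSeries * lambertSeries_mod5Weight_differential_equation

/-- Recursion for the coefficients of the first Rogers–Ramanujan product:
`(15n²+3n)a(n) = 11∑_{k<n}(σ₃(n-k)-σ₁(n-k))a(k) - 60∑_{k<n} k a(k) σ₁(n-k)`. -/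
theorem mod5PartCount_recursion (n : ℕ) (hn : 1 ≤ n) :
    ((15 * n ^ 2 + 3 * n : ℕ) : ℤ) * mod5PartCount n
      = 11 * ∑ k ∈ Finset.range n,
            ((∑ d ∈ (n - k).divisors, (d : ℤ) ^ 3) - ∑ d ∈ (n - k).divisors, (d : ℤ))
              * mod5PartCount k
        - 60 * ∑ k ∈ Finset.range n,
            (k : ℤ) * mod5PartCount k * ∑ d ∈ (n - k).divisors, (d : ℤ) := by
  have h := congrArg (PowerSeries.coeff n) mod5PartSeries_differential_equation
  simp only [← map_ofNat (PowerSeries.C (R := ℤ)), map_add, map_sub, PowerSeries.coeff_C_mul,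
    coeff_lambertSeries_mul, coeff_eulerDerivation, mod5PartSeries, PowerSeries.coeff_mk] at h
  simp only [sub_mul, Finset.sum_sub_distrib, mul_comm (_ * _) (∑ d ∈ _, _)]
  push_cast
  linear_combination h
end

section
/- Let b(n) denote the number of partitions of n into parts congruent to ±1 mod 5. Then for every n ≥ 1, (15n² - 3n)·b(n) = ∑_{k=0}^{n-1} (11σ₃(n-k) + σ₁(n-k))·b(k) - 60·∑_{k=0}^{n-1} k·b(k)·σ₁(n-k). -/
open scoped BigOperators

/-- `b n` = number of partitions of `n` into parts `≡ ±1 (mod 5)`. -/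
noncomputable def mod5PartCountB (n : ℕ) : ℕ :=
  Nat.card {p : n.Partition // ∀ x ∈ p.parts, x % 5 = 1 ∨ x % 5 = 4}

open Finset in
/-- The quadruples `(a, b, x, y)` of positive integers with `a * x + b * y = n`. -/
def bilinearReps (n : ℕ) : Finset (ℕ × ℕ × ℕ × ℕ) :=
  {q ∈ Icc 1 n ×ˢ Icc 1 n ×ˢ Icc 1 n ×ˢ Icc 1 n | q.1 * q.2.2.1 + q.2.1 * q.2.2.2 = n}

lemma mem_bilinearReps {n a b x y : ℕ} :
    (a, b, x, y) ∈ bilinearReps n ↔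
      0 < a ∧ 0 < b ∧ 0 < x ∧ 0 < y ∧ a * x + b * y = n := by
  simp only [bilinearReps, Finset.mem_filter, Finset.mem_product, Finset.mem_Icc]
  constructor
  · rintro ⟨⟨⟨ha, -⟩, ⟨hb, -⟩, ⟨hx, -⟩, ⟨hy, -⟩⟩, h⟩
    exact ⟨ha, hb, hx, hy, h⟩
  · rintro ⟨ha, hb, hx, hy, h⟩
    have h1 : a ≤ a * x := Nat.le_mul_of_pos_right a hx
    have h2 : x ≤ a * x := Nat.le_mul_of_pos_left x ha
    have h3 : b ≤ b * y := Nat.le_mul_of_pos_right b hy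
    have h4 : y ≤ b * y := Nat.le_mul_of_pos_left y hb
    exact ⟨⟨⟨ha, by omega⟩, ⟨hb, by omega⟩, ⟨hx, by omega⟩, ⟨hy, by omega⟩⟩, h⟩

lemma sum_bilinearReps_swap (n : ℕ) (φ : ℕ × ℕ × ℕ × ℕ → ℤ) :
    ∑ q ∈ bilinearReps n, φ q
      = ∑ q ∈ bilinearReps n, φ (q.2.1, q.1, q.2.2.2, q.2.2.1) := by
  refine Finset.sum_nbij' (fun q => (q.2.1, q.1, q.2.2.2, q.2.2.1))
    (fun q => (q.2.1, q.1, q.2.2.2, q.2.2.1)) ?_ ?_ ?_ ?_ ?_ <;> rintro ⟨a, b, x, y⟩ <;>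
    simp only [mem_bilinearReps, implies_true]
  all_goals
    rintro ⟨ha, hb, hx, hy, h⟩
    exact ⟨hb, ha, hy, hx, by rw [add_comm, h]⟩

lemma sum_bilinearReps_gt (n : ℕ) (φ : ℕ → ℕ → ℤ) :
    ∑ q ∈ bilinearReps n, (if q.2.1 < q.1 then φ q.1 q.2.1 else 0)
      = ∑ q ∈ bilinearReps n, (if q.2.2.1 < q.2.2.2 then φ (q.1 + q.2.1) q.2.1 else 0) := by
  rw [← Finset.sum_filter, ← Finset.sum_filter]
  refine Finset.sum_nbij' (fun q => (q.1 - q.2.1, q.2.1, q.2.2.1, q.2.2.1 + q.2.2.2))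
    (fun q => (q.1 + q.2.1, q.2.1, q.2.2.1, q.2.2.2 - q.2.2.1)) ?_ ?_ ?_ ?_ ?_ <;>
    rintro ⟨a, b, x, y⟩ <;> simp only [Finset.mem_filter, mem_bilinearReps] <;>
    rintro ⟨⟨ha, hb, hx, hy, h⟩, hlt⟩
  · obtain ⟨c, rfl⟩ := Nat.exists_eq_add_of_lt hlt
    rw [show b + c + 1 - b = c + 1 by omega]
    refine ⟨⟨by omega, hb, hx, by omega, ?_⟩, by omega⟩
    rw [← h]; ring
  · obtain ⟨c, rfl⟩ := Nat.exists_eq_add_of_lt hlt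
    rw [show x + c + 1 - x = c + 1 by omega]
    refine ⟨⟨by omega, hb, hx, by omega, ?_⟩, by omega⟩
    rw [← h]; ring
  · simp only [Prod.mk.injEq, true_and]; omega
  · simp only [Prod.mk.injEq, true_and]; omega
  · rw [Nat.sub_add_cancel hlt.le]

lemma sum_bilinearReps_lt (n : ℕ) (φ : ℕ → ℕ → ℤ) :
    ∑ q ∈ bilinearReps n, (if q.1 < q.2.1 then φ q.1 q.2.1 else 0)
      = ∑ q ∈ bilinearReps n, (if q.2.2.1 < q.2.2.2 then φ q.2.1 (q.1 + q.2.1) else 0) := by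
  rw [sum_bilinearReps_swap]
  exact sum_bilinearReps_gt n fun a b => φ b a

lemma sum_bilinearReps_diag_left (n : ℕ) (φ : ℕ → ℤ) :
    ∑ q ∈ bilinearReps n, (if q.1 = q.2.1 then φ q.1 else 0)
      = ∑ p ∈ n.divisorsAntidiagonal, ((p.2 : ℤ) - 1) * φ p.1 := by
  rw [← Finset.sum_filter]
  have : ∀ p ∈ n.divisorsAntidiagonal, ((p.2 : ℤ) - 1) * φ p.1
      = ∑ x ∈ Finset.Ico 1 p.2, φ p.1 := by
    rintro ⟨d, e⟩ h
    have he : 1 ≤ e := Nat.pos_of_ne_zero (by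
      rintro rfl; simp [Nat.mem_divisorsAntidiagonal] at h; omega)
    simp [Nat.cast_sub he]
  rw [Finset.sum_congr rfl this, Finset.sum_sigma']
  refine Finset.sum_nbij' (fun q => ⟨(q.1, q.2.2.1 + q.2.2.2), q.2.2.1⟩)
    (fun s => (s.1.1, s.1.1, s.2, s.1.2 - s.2)) ?_ ?_ ?_ ?_ ?_
  · rintro ⟨a, b, x, y⟩
    simp only [Finset.mem_filter, mem_bilinearReps, Finset.mem_sigma,
      Nat.mem_divisorsAntidiagonal, Finset.mem_Ico]
    rintro ⟨⟨ha, hb, hx, hy, h⟩, rfl⟩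
    refine ⟨⟨by rw [← h]; ring, ?_⟩, by omega, by omega⟩
    have := Nat.mul_pos ha hx
    omega
  · rintro ⟨⟨d, e⟩, x⟩
    simp only [Finset.mem_filter, mem_bilinearReps, Finset.mem_sigma,
      Nat.mem_divisorsAntidiagonal, Finset.mem_Ico]
    rintro ⟨⟨h, hn⟩, hx, hxe⟩
    have hd : 0 < d := Nat.pos_of_ne_zero (by rintro rfl; simp at h; omega)
    refine ⟨⟨hd, hd, by omega, by omega, ?_⟩, trivial⟩
    rw [← mul_add, Nat.add_sub_cancel' hxe.le, h]
  · rintro ⟨a, b, x, y⟩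
    simp only [Finset.mem_filter, Prod.mk.injEq]
    rintro ⟨-, rfl⟩
    simp
  · rintro ⟨⟨d, e⟩, x⟩
    simp only [Finset.mem_sigma, Finset.mem_Ico]
    rintro ⟨-, -, hxe⟩
    simp [Nat.add_sub_cancel' hxe.le]
  · intros; rfl

lemma sum_bilinearReps_diag_right (n : ℕ) (φ : ℕ → ℕ → ℤ) :
    ∑ q ∈ bilinearReps n, (if q.2.2.1 = q.2.2.2 then φ q.1 (q.1 + q.2.1) else 0)
      = ∑ p ∈ n.divisorsAntidiagonal, ∑ a ∈ Finset.Ico 1 p.1, φ a p.1 := by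
  rw [← Finset.sum_filter, Finset.sum_sigma']
  refine Finset.sum_nbij' (fun q => ⟨(q.1 + q.2.1, q.2.2.1), q.1⟩)
    (fun s => (s.2, s.1.1 - s.2, s.1.2, s.1.2)) ?_ ?_ ?_ ?_ ?_
  · rintro ⟨a, b, x, y⟩
    simp only [Finset.mem_filter, mem_bilinearReps, Finset.mem_sigma,
      Nat.mem_divisorsAntidiagonal, Finset.mem_Ico]
    rintro ⟨⟨ha, hb, hx, hy, h⟩, rfl⟩
    refine ⟨⟨by rw [← h]; ring, ?_⟩, by omega, by omega⟩
    have := Nat.mul_pos ha hx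
    omega
  · rintro ⟨⟨d, e⟩, x⟩
    simp only [Finset.mem_filter, mem_bilinearReps, Finset.mem_sigma,
      Nat.mem_divisorsAntidiagonal, Finset.mem_Ico]
    rintro ⟨⟨h, hn⟩, hx, hxd⟩
    have he : 0 < e := Nat.pos_of_ne_zero (by rintro rfl; simp at h; omega)
    refine ⟨⟨by omega, by omega, he, he, ?_⟩, trivial⟩
    rw [← add_mul, Nat.add_sub_cancel' hxd.le, h]
  · rintro ⟨a, b, x, y⟩
    simp only [Finset.mem_filter, Prod.mk.injEq]
    rintro ⟨-, rfl⟩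
    simp
  · rintro ⟨⟨d, e⟩, x⟩
    simp only [Finset.mem_sigma, Finset.mem_Ico]
    rintro ⟨-, -, hxd⟩
    simp [Nat.add_sub_cancel' hxd.le]
  · intros; rfl

lemma sum_bilinearReps_trichotomy (n : ℕ) (u v : ℕ × ℕ × ℕ × ℕ → ℕ) (φ : ℕ × ℕ × ℕ × ℕ → ℤ) :
    ∑ q ∈ bilinearReps n, φ q
      = ∑ q ∈ bilinearReps n, (if u q < v q then φ q else 0)
        + ∑ q ∈ bilinearReps n, (if v q < u q then φ q else 0)
        + ∑ q ∈ bilinearReps n, (if u q = v q then φ q else 0) := by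
  rw [← Finset.sum_add_distrib, ← Finset.sum_add_distrib]
  refine Finset.sum_congr rfl fun q _ => ?_
  rcases lt_trichotomy (u q) (v q) with h | h | h
  · simp [h, h.not_gt, h.ne]
  · simp [h]
  · simp [h, h.not_gt, h.ne']

/-- Liouville's identity for an even function of two integer variables. -/
theorem sum_bilinearReps_liouville (n : ℕ) (f : ℤ → ℤ → ℤ) (hf : ∀ a b, f (-a) (-b) = f a b) :
    ∑ q ∈ bilinearReps n, (f q.1 q.2.1 - f q.1 (-q.2.1) + f q.1 (q.1 - q.2.1)
        - f q.1 (q.1 + q.2.1) + f (q.2.1 - q.1) q.2.1 - f (q.1 + q.2.1) q.2.1)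
      = ∑ p ∈ n.divisorsAntidiagonal,
          (((p.2 : ℤ) - 1) * (f p.1 p.1 + f p.1 0 + f 0 p.1)
            - ∑ a ∈ Finset.Ico 1 p.1, (f a (a - p.1) + f a p.1 + f p.1 (p.1 - a))) := by
  have swap_xy : ∀ φ : ℕ → ℕ → ℤ,
      ∑ q ∈ bilinearReps n, (if q.2.2.2 < q.2.2.1 then φ q.1 q.2.1 else 0)
        = ∑ q ∈ bilinearReps n, (if q.2.2.1 < q.2.2.2 then φ q.2.1 q.1 else 0) := fun φ => by
    rw [sum_bilinearReps_swap]
  have ab := fun φ : ℕ → ℕ → ℤ => sum_bilinearReps_trichotomy n (fun q => q.1) (fun q => q.2.1)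
    (fun q => φ q.1 q.2.1)
  have xy := fun φ : ℕ → ℕ → ℤ => sum_bilinearReps_trichotomy n (fun q => q.2.2.1)
    (fun q => q.2.2.2) (fun q => φ q.1 q.2.1)
  have diag : ∀ φ : ℕ → ℕ → ℤ,
      ∑ q ∈ bilinearReps n, (if q.1 = q.2.1 then φ q.1 q.2.1 else 0)
        = ∑ p ∈ n.divisorsAntidiagonal, ((p.2 : ℤ) - 1) * φ p.1 p.1 := fun φ => by
    rw [← sum_bilinearReps_diag_left n fun a => φ a a]
    refine Finset.sum_congr rfl fun q _ => ?_
    split_ifs with h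
    · rw [← h]
    · rfl
  have e1 := ab fun a b => f a b
  have e2 := xy fun a b => f a (-b)
  have e3 := ab fun a b => f a (a - b)
  have e4 := xy fun a b => f a (a + b)
  have e5 := ab fun a b => f (b - a) b
  have e6 := xy fun a b => f (a + b) b
  have g3 := sum_bilinearReps_gt n fun a b => f a (a - b)
  have g5 := sum_bilinearReps_gt n fun a b => f (b - a) b
  have g1 := sum_bilinearReps_gt n fun a b => f a b
  have l3 := sum_bilinearReps_lt n fun a b => f a (a - b)
  have l5 := sum_bilinearReps_lt n fun a b => f (b - a) b
  have l1 := sum_bilinearReps_lt n fun a b => f a b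
  have s2 := swap_xy fun a b => f a (-b)
  have s4 := swap_xy fun a b => f a (a + b)
  have s6 := swap_xy fun a b => f (a + b) b
  have d1 := diag fun a b => f a b
  have d3 := diag fun a b => f a (a - b)
  have d5 := diag fun a b => f (b - a) b
  have r2 := sum_bilinearReps_diag_right n fun a m => f a (a - m)
  have r4 := sum_bilinearReps_diag_right n fun a m => f a m
  have r6 := sum_bilinearReps_diag_right n fun a m => f m (m - a)
  have hneg : ∀ a b : ℤ, f (-a) b = f a (-b) := fun a b => by rw [← hf a (-b), neg_neg]
  have c1 : ∀ a b : ℤ, a + b - b = a := fun a b => by ring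
  have c2 : ∀ a b : ℤ, a + b - a = b := fun a b => by ring
  have c3 : ∀ a b : ℤ, b - (a + b) = -a := fun a b => by ring
  have c4 : ∀ a b : ℤ, a - (a + b) = -b := fun a b => by ring
  simp only [Nat.cast_add, c1, c2, c3, c4, sub_self, hneg] at *
  simp only [Finset.sum_add_distrib, Finset.sum_sub_distrib, mul_add]
  simp only [add_comm] at *
  linarith

/-- The indicator function of the classes `±1` modulo `5`. -/
def chiPM (r : ZMod 5) : ℤ := if r = 1 ∨ r = 4 then 1 else 0

lemma chiPM_natCast (d : ℕ) : chiPM d = if d % 5 = 1 ∨ d % 5 = 4 then 1 else 0 := by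
  have h1 := ZMod.natCast_eq_natCast_iff' d 1 5
  have h4 := ZMod.natCast_eq_natCast_iff' d 4 5
  norm_num at h1 h4
  simp only [chiPM, h1, h4]

/-- The even weight on `(ℤ/5)²` for which Liouville's identity yields
`sum_bilinearReps_chiPM`. -/
def liouvilleWeight (r s : ZMod 5) : ℤ :=
  !![0, -33, -12, -12, -33;
    -30, 0, -12, 12, 0;
    0, -42, 0, -48, 0;
    0, 0, -48, 0, -42;
    -30, 0, 12, -12, 0] r s

lemma liouvilleWeight_neg (r s : ZMod 5) : liouvilleWeight (-r) (-s) = liouvilleWeight r s := by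
  revert r s; decide

lemma sum_range_five_mul_add (p q : ZMod 5 → ℤ) (M : ℤ) (k r : ℕ) :
    6 * ∑ a ∈ Finset.range (5 * k + r), ((a : ℤ) ^ 2 * p a + M * q a)
      = 6 * ∑ a ∈ Finset.range r, (a : ℤ) ^ 2 * p a
        + 25 * k * (k - 1) * (2 * k - 1) * ∑ i ∈ Finset.range 5, p (r + i)
        + 30 * k * (k - 1) * ∑ i ∈ Finset.range 5, (r + i : ℤ) * p (r + i)
        + 6 * k * ∑ i ∈ Finset.range 5, (r + i : ℤ) ^ 2 * p (r + i)
        + 6 * M * (∑ a ∈ Finset.range r, q a + k * ∑ i ∈ Finset.range 5, q (r + i)) := by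
  induction k with
  | zero => simp [Finset.sum_add_distrib, Finset.mul_sum, mul_add, mul_assoc]
  | succ k ih =>
    have h5 : (5 : ZMod 5) = 0 := rfl
    rw [show 5 * (k + 1) + r = 5 * k + r + 5 by ring, Finset.sum_range_add, mul_add, ih]
    simp only [Finset.sum_range_succ, Finset.sum_range_zero]
    push_cast
    simp only [h5, zero_mul, zero_add]
    ring

/-- The function on `ℤ/5` with a given list of values. -/
def residueTable (v : Fin 5 → ℤ) (r : ZMod 5) : ℤ := v r

lemma liouvilleWeight_sum_range (k : ℕ) (r : ZMod 5) (M : ℤ) (hM : M = 5 * k + r.val) :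
    ∑ a ∈ Finset.range (5 * k + r.val),
      ((a : ℤ) ^ 2 * (liouvilleWeight a (a - r) + liouvilleWeight a r)
        + M ^ 2 * liouvilleWeight r (r - a))
      = 30 * chiPM r * M ^ 2 - 22 * M ^ 3 - 2 * M - 6 * chiPM r * M := by
  have h := sum_range_five_mul_add (fun a => liouvilleWeight a (a - r) + liouvilleWeight a r)
    (fun a => liouvilleWeight r (r - a)) (M ^ 2) k r.val
  refine mul_left_cancel₀ (show (6 : ℤ) ≠ 0 by norm_num) (h.trans ?_)
  clear h
  subst hM
  have base : ∀ r : ZMod 5, ∑ a ∈ Finset.range r.val,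
      (a : ℤ) ^ 2 * (liouvilleWeight a (a - r) + liouvilleWeight a r)
        = residueTable ![0, 0, -12, -168, -960] r := by decide
  have baseQ : ∀ r : ZMod 5, ∑ a ∈ Finset.range r.val, liouvilleWeight r (r - a)
      = residueTable ![0, 0, -42, -48, 0] r := by decide
  have moment0 : ∀ r : ZMod 5, ∑ i ∈ Finset.range 5,
      (liouvilleWeight (r.val + i) (r.val + i - r) + liouvilleWeight (r.val + i) r)
        = residueTable ![-60, -240, -60, -60, -240] r := by decide
  have moment1 : ∀ r : ZMod 5, ∑ i ∈ Finset.range 5, (r.val + i : ℤ) *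
      (liouvilleWeight (r.val + i) (r.val + i - r) + liouvilleWeight (r.val + i) r)
        = residueTable ![-150, -720, -240, -360, -1530] r := by decide
  have moment2 : ∀ r : ZMod 5, ∑ i ∈ Finset.range 5, (r.val + i : ℤ) ^ 2 *
      (liouvilleWeight (r.val + i) (r.val + i - r) + liouvilleWeight (r.val + i) r)
        = residueTable ![-510, -2640, -1080, -2280, -10290] r := by decide
  have momentQ : ∀ r : ZMod 5, ∑ i ∈ Finset.range 5, liouvilleWeight r (r - (r.val + i))
      = residueTable ![-90, -30, -90, -90, -30] r := by decide
  have hchi : ∀ r : ZMod 5, chiPM r = residueTable ![0, 1, 0, 0, 1] r := by decide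
  have hval : ∀ r : ZMod 5, (r.val : ℤ) = residueTable ![0, 1, 2, 3, 4] r := by decide
  rw [base, baseQ, moment0, moment1, moment2, momentQ, hchi, hval]
  generalize (k : ℤ) = m
  clear base baseQ moment0 moment1 moment2 momentQ hchi hval
  change Fin 5 at r
  fin_cases r <;> simp [residueTable] <;> ring

lemma liouvilleWeight_sum_Ico (d : ℕ) (hd : 0 < d) :
    ∑ a ∈ Finset.Ico 1 d,
      ((a : ℤ) ^ 2 * liouvilleWeight a (a - d) + (a : ℤ) ^ 2 * liouvilleWeight a d
        + (d : ℤ) ^ 2 * liouvilleWeight d (d - a))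
      = 30 * chiPM d * d ^ 2 - 22 * d ^ 3 - 2 * d - 6 * chiPM d * d := by
  have h := liouvilleWeight_sum_range (d / 5) d d
    (by rw [ZMod.val_natCast]; exact_mod_cast (Nat.div_add_mod d 5).symm)
  rw [ZMod.val_natCast, Nat.div_add_mod, Finset.range_eq_Ico,
    Finset.sum_eq_sum_Ico_succ_bot hd] at h
  have h0 : liouvilleWeight d d = 0 := by
    generalize (d : ZMod 5) = r
    revert r; decide
  rw [← h]
  simp [h0, mul_add]

lemma sum_bilinearReps_chiPM (n : ℕ) :
    ∑ q ∈ bilinearReps n, (q.1 : ℤ) * q.2.1 *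
        (30 * chiPM q.1 * chiPM q.2.1 + 120 * chiPM q.2.1)
      = ∑ d ∈ n.divisors, (22 * (d : ℤ) ^ 3 + 2 * d - 30 * n * d * chiPM d + 6 * d * chiPM d) := by
  have h := sum_bilinearReps_liouville n (fun a b => a ^ 2 * liouvilleWeight a b)
    (fun a b => by simp [liouvilleWeight_neg])
  have hR : ∀ p ∈ n.divisorsAntidiagonal,
      (((p.2 : ℤ) - 1) * ((p.1 : ℤ) ^ 2 * liouvilleWeight (p.1 : ℤ) (p.1 : ℤ)
            + (p.1 : ℤ) ^ 2 * liouvilleWeight (p.1 : ℤ) (0 : ℤ)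
            + 0 ^ 2 * liouvilleWeight (0 : ℤ) (p.1 : ℤ))
        - ∑ a ∈ Finset.Ico 1 p.1,
          ((a : ℤ) ^ 2 * liouvilleWeight (a : ℤ) ((a - p.1 : ℤ) : ZMod 5)
            + (a : ℤ) ^ 2 * liouvilleWeight (a : ℤ) (p.1 : ℤ)
            + (p.1 : ℤ) ^ 2 * liouvilleWeight (p.1 : ℤ) ((p.1 - a : ℤ) : ZMod 5)))
        = 22 * (p.1 : ℤ) ^ 3 + 2 * p.1 - 30 * n * p.1 * chiPM p.1 + 6 * p.1 * chiPM p.1 := by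
    rintro ⟨d, e⟩ hp
    obtain ⟨hde, hn⟩ := Nat.mem_divisorsAntidiagonal.1 hp
    have hd : 0 < d := Nat.pos_of_ne_zero (by rintro rfl; simp at hde; omega)
    have hw : ∀ r : ZMod 5, liouvilleWeight r r = 0 ∧ liouvilleWeight r 0 = -30 * chiPM r := by
      decide
    push_cast
    rw [liouvilleWeight_sum_Ico d hd, (hw d).1, (hw d).2, ← hde]
    push_cast
    ring
  rw [Finset.sum_congr rfl hR, Nat.sum_divisorsAntidiagonal (fun d _ =>
    22 * (d : ℤ) ^ 3 + 2 * d - 30 * n * d * chiPM d + 6 * d * chiPM d)] at h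
  rw [← h]
  have hw : ∀ r s : ZMod 5,
      liouvilleWeight r s - liouvilleWeight r (-s) + liouvilleWeight r (r - s)
          - liouvilleWeight r (r + s) + liouvilleWeight (s - r) s - liouvilleWeight (r + s) s
          + liouvilleWeight (r - s) r - liouvilleWeight (s + r) r = 0 ∧
        -(liouvilleWeight (s - r) s + liouvilleWeight (r + s) s + liouvilleWeight (r - s) r
            + liouvilleWeight (s + r) r) = 30 * chiPM r * chiPM s + 60 * chiPM r + 60 * chiPM s := by
    decide
  have hswap := fun φ : ℕ → ℕ → ℤ => sum_bilinearReps_swap n fun q => φ q.1 q.2.1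
  refine mul_left_cancel₀ (two_ne_zero (α := ℤ)) ?_
  rw [two_mul, two_mul]
  conv_lhs => enter [2]; rw [hswap fun a b => (a : ℤ) * b *
    (30 * chiPM a * chiPM b + 120 * chiPM b)]
  conv_rhs => enter [2]; rw [hswap fun a b => (a : ℤ) ^ 2 * liouvilleWeight (a : ℤ) (b : ℤ)
    - (a : ℤ) ^ 2 * liouvilleWeight (a : ℤ) ((-b : ℤ) : ZMod 5)
    + (a : ℤ) ^ 2 * liouvilleWeight (a : ℤ) ((a - b : ℤ) : ZMod 5)
    - (a : ℤ) ^ 2 * liouvilleWeight (a : ℤ) ((a + b : ℤ) : ZMod 5)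
    + (b - a : ℤ) ^ 2 * liouvilleWeight ((b - a : ℤ) : ZMod 5) (b : ℤ)
    - (a + b : ℤ) ^ 2 * liouvilleWeight ((a + b : ℤ) : ZMod 5) (b : ℤ)]
  rw [← Finset.sum_add_distrib, ← Finset.sum_add_distrib]
  refine Finset.sum_congr rfl fun q _ => ?_
  obtain ⟨a, b, x, y⟩ := q
  push_cast
  linear_combination (-(a : ℤ) ^ 2) * (hw a b).1 - (b : ℤ) ^ 2 * (hw b a).1
    - 2 * (a : ℤ) * b * (hw a b).2

lemma sum_antidiagonal_divisors_mul_divisors (n : ℕ) (u v : ℕ → ℤ) :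
    ∑ p ∈ Finset.HasAntidiagonal.antidiagonal n, (∑ d ∈ p.1.divisors, u d) * ∑ d ∈ p.2.divisors, v d
      = ∑ q ∈ bilinearReps n, u q.1 * v q.2.1 := by
  have : ∀ p ∈ Finset.HasAntidiagonal.antidiagonal n,
      (∑ d ∈ p.1.divisors, u d) * ∑ d ∈ p.2.divisors, v d
        = ∑ s ∈ p.1.divisorsAntidiagonal ×ˢ p.2.divisorsAntidiagonal, u s.1.1 * v s.2.1 := by
    intro p _
    rw [← Nat.sum_divisorsAntidiagonal (fun d _ => u d),
      ← Nat.sum_divisorsAntidiagonal (fun d _ => v d), Finset.sum_mul_sum, Finset.sum_product]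
  rw [Finset.sum_congr rfl this, Finset.sum_sigma']
  refine Finset.sum_nbij' (fun s => (s.2.1.1, s.2.2.1, s.2.1.2, s.2.2.2))
    (fun q => ⟨(q.1 * q.2.2.1, q.2.1 * q.2.2.2), (q.1, q.2.2.1), (q.2.1, q.2.2.2)⟩) ?_ ?_ ?_ ?_ ?_
  · rintro ⟨⟨i, j⟩, ⟨a, x⟩, ⟨b, y⟩⟩
    simp only [Finset.mem_sigma, Finset.HasAntidiagonal.mem_antidiagonal, Finset.mem_product,
      Nat.mem_divisorsAntidiagonal, mem_bilinearReps]
    rintro ⟨h, ⟨rfl, hi⟩, ⟨rfl, hj⟩⟩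
    simp only [ne_eq, mul_eq_zero, not_or] at hi hj
    exact ⟨by omega, by omega, by omega, by omega, h⟩
  · rintro ⟨a, b, x, y⟩
    simp only [Finset.mem_sigma, Finset.HasAntidiagonal.mem_antidiagonal, Finset.mem_product,
      Nat.mem_divisorsAntidiagonal, mem_bilinearReps]
    rintro ⟨ha, hb, hx, hy, h⟩
    exact ⟨h, ⟨trivial, (Nat.mul_pos ha hx).ne'⟩, ⟨trivial, (Nat.mul_pos hb hy).ne'⟩⟩
  · rintro ⟨⟨i, j⟩, ⟨a, x⟩, ⟨b, y⟩⟩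
    simp only [Finset.mem_sigma, Finset.HasAntidiagonal.mem_antidiagonal, Finset.mem_product,
      Nat.mem_divisorsAntidiagonal]
    rintro ⟨-, ⟨rfl, -⟩, ⟨rfl, -⟩⟩
    rfl
  · intros; rfl
  · intros; rfl

lemma card_restricted_filter_le_count (P : ℕ → Prop) [DecidablePred P] {d : ℕ} (hd : 0 < d)
    (hP : P d) (k m : ℕ) :
    ((Nat.Partition.restricted (k + m * d) P).filter fun p => m ≤ p.parts.count d).card
      = (Nat.Partition.restricted k P).card := by
  refine Finset.card_bij'
    (fun p hp => ⟨p.parts - Multiset.replicate m d, fun {i} hi =>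
      p.parts_pos (Multiset.mem_of_le (Multiset.sub_le_self _ _) hi), ?_⟩)
    (fun q _ => ⟨q.parts + Multiset.replicate m d, fun {i} hi => ?_, ?_⟩) ?_ ?_ ?_ ?_
  · have hle := Multiset.le_count_iff_replicate_le.1 (Finset.mem_filter.1 hp).2
    have h := congrArg Multiset.sum (Multiset.sub_add_cancel hle)
    rw [Multiset.sum_add, p.parts_sum, Multiset.sum_replicate, smul_eq_mul] at h
    omega
  · rcases Multiset.mem_add.1 hi with hi | hi
    · exact q.parts_pos hi
    · rwa [Multiset.eq_of_mem_replicate hi]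
  · rw [Multiset.sum_add, q.parts_sum, Multiset.sum_replicate, smul_eq_mul]
  · intro p hp
    simp only [Nat.Partition.restricted, Finset.mem_filter, Finset.mem_univ, true_and] at hp ⊢
    exact fun i hi => hp.1 i (Multiset.mem_of_le (Multiset.sub_le_self _ _) hi)
  · intro q hq
    simp only [Nat.Partition.restricted, Finset.mem_filter, Finset.mem_univ, true_and] at hq ⊢
    refine ⟨fun i hi => ?_, by simp⟩
    rcases Multiset.mem_add.1 hi with hi | hi
    · exact hq i hi
    · rwa [Multiset.eq_of_mem_replicate hi]
  · intro p hp
    exact Nat.Partition.ext (Multiset.sub_add_cancel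
      (Multiset.le_count_iff_replicate_le.1 (Finset.mem_filter.1 hp).2))
  · intro q hq
    exact Nat.Partition.ext (Multiset.add_sub_cancel_right ..)

lemma mul_card_restricted (P : ℕ → Prop) [DecidablePred P] (n : ℕ) :
    n * (Nat.Partition.restricted n P).card
      = ∑ p ∈ Finset.HasAntidiagonal.antidiagonal n,
          (∑ d ∈ p.1.divisors, if P d then d else 0) * (Nat.Partition.restricted p.2 P).card := by
  have hsum : ∀ p : n.Partition, n = ∑ d ∈ Finset.Icc 1 n, ∑ m ∈ Finset.Icc 1 n,
      if m ≤ p.parts.count d then d else 0 := by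
    intro p
    have hsub : p.parts.toFinset ⊆ Finset.Icc 1 n := fun d hd => by
      rw [Multiset.mem_toFinset] at hd
      exact Finset.mem_Icc.2 ⟨p.parts_pos hd, Nat.Partition.le_of_mem_parts hd⟩
    conv_lhs => rw [← p.parts_sum, Finset.sum_multiset_count_of_subset _ _ hsub]
    refine Finset.sum_congr rfl fun d hd => ?_
    have hd1 := (Finset.mem_Icc.1 hd).1
    have hle : p.parts.count d ≤ n := by
      have h := Multiset.card_nsmul_le_sum (s := p.parts) (a := 1) fun i hi => p.parts_pos hi
      rw [p.parts_sum, smul_eq_mul, mul_one] at h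
      exact (Multiset.count_le_card _ _).trans h
    rw [← Finset.sum_filter, Finset.sum_const]
    congr 1
    rw [show (Finset.Icc 1 n).filter (fun m => m ≤ p.parts.count d)
      = Finset.Icc 1 (p.parts.count d) by ext m; simp; omega]
    simp
  have hcount : ∀ d ∈ Finset.Icc 1 n, ∀ m ∈ Finset.Icc 1 n,
      ((Nat.Partition.restricted n P).filter fun p => m ≤ p.parts.count d).card * d
        = if m * d ≤ n then (if P d then d else 0) * (Nat.Partition.restricted (n - m * d) P).card
          else 0 := by
    intro d hd m hm
    rw [Finset.mem_Icc] at hd hm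
    have hmem : ∀ p ∈ (Nat.Partition.restricted n P).filter fun p => m ≤ p.parts.count d,
        P d ∧ m * d ≤ n := by
      intro p hp
      simp only [Nat.Partition.restricted, Finset.mem_filter, Finset.mem_univ, true_and] at hp
      have h := Multiset.le_count_iff_replicate_le.1 hp.2
      refine ⟨hp.1 d (Multiset.count_pos.1 (by omega)), ?_⟩
      have hs := congrArg Multiset.sum (Multiset.sub_add_cancel h)
      rw [Multiset.sum_add, p.parts_sum, Multiset.sum_replicate, smul_eq_mul] at hs
      omega
    by_cases hPd : P d ∧ m * d ≤ n
    · obtain ⟨k, rfl⟩ := Nat.exists_eq_add_of_le' hPd.2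
      rw [card_restricted_filter_le_count P (by omega) hPd.1, if_pos hPd.2, if_pos hPd.1,
        Nat.add_sub_cancel, mul_comm]
    · rw [Finset.card_eq_zero.2 (Finset.eq_empty_of_forall_notMem fun p hp => hPd (hmem p hp))]
      split_ifs <;> simp_all
  calc n * (Nat.Partition.restricted n P).card
      = ∑ p ∈ Nat.Partition.restricted n P, ∑ d ∈ Finset.Icc 1 n, ∑ m ∈ Finset.Icc 1 n,
          if m ≤ p.parts.count d then d else 0 := by
        rw [← Finset.sum_congr rfl fun p _ => hsum p, Finset.sum_const, smul_eq_mul, mul_comm]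
    _ = ∑ d ∈ Finset.Icc 1 n, ∑ m ∈ Finset.Icc 1 n,
          ((Nat.Partition.restricted n P).filter fun p => m ≤ p.parts.count d).card * d := by
        rw [Finset.sum_comm]
        refine Finset.sum_congr rfl fun d _ => ?_
        rw [Finset.sum_comm]
        refine Finset.sum_congr rfl fun m _ => ?_
        rw [← Finset.sum_filter, Finset.sum_const, smul_eq_mul]
    _ = ∑ s ∈ (Finset.Icc 1 n ×ˢ Finset.Icc 1 n).filter (fun s => s.2 * s.1 ≤ n),
          (if P s.1 then s.1 else 0) * (Nat.Partition.restricted (n - s.2 * s.1) P).card := by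
        rw [Finset.sum_filter, Finset.sum_product]
        exact Finset.sum_congr rfl fun d hd => Finset.sum_congr rfl fun m hm => hcount d hd m hm
    _ = _ := by
        have : ∀ p ∈ Finset.HasAntidiagonal.antidiagonal n,
            (∑ d ∈ p.1.divisors, if P d then d else 0) * (Nat.Partition.restricted p.2 P).card
              = ∑ s ∈ p.1.divisorsAntidiagonal,
                (if P s.1 then s.1 else 0) * (Nat.Partition.restricted p.2 P).card := fun p _ => by
          rw [Finset.sum_mul, Nat.sum_divisorsAntidiagonal (fun d _ =>
            (if P d then d else 0) * (Nat.Partition.restricted p.2 P).card)]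
        rw [Finset.sum_congr rfl this, Finset.sum_sigma']
        refine Finset.sum_nbij' (fun s => ⟨(s.2 * s.1, n - s.2 * s.1), s⟩) (fun t => t.2)
          ?_ ?_ ?_ ?_ ?_
        · rintro ⟨d, m⟩
          simp only [Finset.mem_filter, Finset.mem_product, Finset.mem_Icc, Finset.mem_sigma,
            Finset.HasAntidiagonal.mem_antidiagonal, Nat.mem_divisorsAntidiagonal]
          rintro ⟨⟨⟨hd, -⟩, ⟨hm, -⟩⟩, h⟩
          exact ⟨by omega, mul_comm _ _, (Nat.mul_pos hm hd).ne'⟩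
        · rintro ⟨⟨i, j⟩, ⟨d, m⟩⟩
          simp only [Finset.mem_filter, Finset.mem_product, Finset.mem_Icc, Finset.mem_sigma,
            Finset.HasAntidiagonal.mem_antidiagonal, Nat.mem_divisorsAntidiagonal]
          rintro ⟨h, rfl, hi⟩
          simp only [ne_eq, mul_eq_zero, not_or] at hi
          have h1 : d ≤ d * m := Nat.le_mul_of_pos_right d (by omega)
          have h2 : m ≤ d * m := Nat.le_mul_of_pos_left m (by omega)
          rw [mul_comm m d]
          omega
        · intros; rfl
        · rintro ⟨⟨i, j⟩, ⟨d, m⟩⟩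
          simp only [Finset.mem_sigma, Finset.HasAntidiagonal.mem_antidiagonal, Nat.mem_divisorsAntidiagonal]
          rintro ⟨h, rfl, hi⟩
          rw [mul_comm m d, show n - d * m = j by omega]
        · intros; rfl

lemma mod5PartCountB_eq_card_restricted (n : ℕ) :
    mod5PartCountB n
      = (Nat.Partition.restricted n fun d => d % 5 = 1 ∨ d % 5 = 4).card := by
  rw [mod5PartCountB, Nat.card_eq_fintype_card, Fintype.card_subtype]
  rfl

lemma mul_mod5PartCountB (n : ℕ) :
    (n : ℤ) * mod5PartCountB n = ∑ p ∈ Finset.HasAntidiagonal.antidiagonal n,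
      (∑ d ∈ p.1.divisors, (d : ℤ) * chiPM d) * mod5PartCountB p.2 := by
  simp only [mod5PartCountB_eq_card_restricted]
  have h := mul_card_restricted (fun d => d % 5 = 1 ∨ d % 5 = 4) n
  have hchi : ∀ d : ℕ, (d : ℤ) * chiPM d = ((if d % 5 = 1 ∨ d % 5 = 4 then d else 0 : ℕ) : ℤ) := by
    intro d
    rw [chiPM_natCast]
    split_ifs <;> simp
  simp only [hchi]
  exact_mod_cast h

lemma divisor_sum_convolution (n : ℕ) :
    15 * ∑ p ∈ Finset.HasAntidiagonal.antidiagonal n,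
        (∑ d ∈ p.1.divisors, (d : ℤ) * chiPM d) * ∑ d ∈ p.2.divisors, (d : ℤ) * chiPM d
      + 60 * ∑ p ∈ Finset.HasAntidiagonal.antidiagonal n,
        (∑ d ∈ p.1.divisors, (d : ℤ)) * ∑ d ∈ p.2.divisors, (d : ℤ) * chiPM d
      + (15 * n - 3) * ∑ d ∈ n.divisors, (d : ℤ) * chiPM d
      = 11 * ∑ d ∈ n.divisors, (d : ℤ) ^ 3 + ∑ d ∈ n.divisors, (d : ℤ) := by
  have h := sum_bilinearReps_chiPM n
  rw [sum_antidiagonal_divisors_mul_divisors n (fun d => d * chiPM d) (fun d => d * chiPM d),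
    sum_antidiagonal_divisors_mul_divisors n (fun d => d) (fun d => d * chiPM d)]
  have hl : ∀ q ∈ bilinearReps n, (q.1 : ℤ) * q.2.1 *
      (30 * chiPM q.1 * chiPM q.2.1 + 120 * chiPM q.2.1)
        = 30 * ((q.1 : ℤ) * chiPM q.1 * ((q.2.1 : ℤ) * chiPM q.2.1))
          + 120 * ((q.1 : ℤ) * ((q.2.1 : ℤ) * chiPM q.2.1)) := fun q _ => by ring
  have hr : ∀ d ∈ n.divisors,
      (22 * (d : ℤ) ^ 3 + 2 * d - 30 * n * d * chiPM d + 6 * d * chiPM d)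
        = 22 * (d : ℤ) ^ 3 + 2 * d - (30 * n - 6) * (d * chiPM d) := fun d _ => by ring
  rw [Finset.sum_congr rfl hl, Finset.sum_congr rfl hr, Finset.sum_sub_distrib,
    Finset.sum_add_distrib, Finset.sum_add_distrib] at h
  simp only [← Finset.mul_sum] at h
  linarith

open PowerSeries in
/-- Recursion for the coefficients of the second Rogers–Ramanujan product:
`(15n²-3n)b(n) = ∑_{k<n}(11σ₃(n-k)+σ₁(n-k))b(k) - 60∑_{k<n} k b(k) σ₁(n-k)`. -/
theorem mod5PartCountB_recursion (n : ℕ) (hn : 1 ≤ n) :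
    ((15 * n ^ 2 - 3 * n : ℕ) : ℤ) * mod5PartCountB n
      = ∑ k ∈ Finset.range n,
            (11 * (∑ d ∈ (n - k).divisors, (d : ℤ) ^ 3) + ∑ d ∈ (n - k).divisors, (d : ℤ))
              * mod5PartCountB k
        - 60 * ∑ k ∈ Finset.range n,
            (k : ℤ) * mod5PartCountB k * ∑ d ∈ (n - k).divisors, (d : ℤ) := by
  let θ : PowerSeries ℤ → PowerSeries ℤ := fun F => PowerSeries.mk fun i => (i : ℤ) * coeff i F
  let G : PowerSeries ℤ := PowerSeries.mk fun i => (mod5PartCountB i : ℤ)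
  let A : PowerSeries ℤ := PowerSeries.mk fun i => ∑ d ∈ i.divisors, (d : ℤ) * chiPM d
  let S : PowerSeries ℤ := PowerSeries.mk fun i => ∑ d ∈ i.divisors, (d : ℤ)
  let T : PowerSeries ℤ := PowerSeries.mk fun i => ∑ d ∈ i.divisors, (d : ℤ) ^ 3
  have hθmul : ∀ E F, θ (E * F) = θ E * F + E * θ F := by
    intro E F
    ext i
    simp only [θ, coeff_mk, map_add, coeff_mul, Finset.mul_sum, ← Finset.sum_add_distrib]
    refine Finset.sum_congr rfl fun p hp => ?_
    rw [← Finset.HasAntidiagonal.mem_antidiagonal.1 hp]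
    push_cast
    ring
  have hG : θ G = A * G := by
    ext i
    simp only [θ, G, A, coeff_mk, coeff_mul]
    exact mul_mod5PartCountB i
  have hA : 15 * (A * A) + 60 * (S * A) + 15 * θ A - 3 * A = 11 * T + S := by
    ext i
    have h15 : (15 : PowerSeries ℤ) = C 15 := rfl
    have h60 : (60 : PowerSeries ℤ) = C 60 := rfl
    have h3 : (3 : PowerSeries ℤ) = C 3 := rfl
    have h11 : (11 : PowerSeries ℤ) = C 11 := rfl
    rw [h15, h60, h3, h11]
    simp only [map_add, map_sub, coeff_C_mul]
    have h := divisor_sum_convolution i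
    simp only [θ, S, T, A, coeff_mk, coeff_mul]
    linarith
  have hode : 15 * θ (θ G) - 3 * θ G = (11 * T + S) * G - 60 * (S * θ G) := by
    rw [← hA, hG, hθmul, hG]
    ring
  have hconv : ∀ u v : ℕ → ℤ, u 0 = 0 →
      coeff n (PowerSeries.mk u * PowerSeries.mk v) = ∑ k ∈ Finset.range n, u (n - k) * v k := by
    intro u v hu
    rw [mul_comm, coeff_mul, Finset.Nat.sum_antidiagonal_eq_sum_range_succ_mk,
      Finset.sum_range_succ]
    simp [hu, mul_comm]
  have h := congrArg (coeff n) hode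
  have hTS : 11 * T + S = PowerSeries.mk fun i =>
      11 * (∑ d ∈ i.divisors, (d : ℤ) ^ 3) + ∑ d ∈ i.divisors, (d : ℤ) := by
    ext i
    have h11 : (11 : PowerSeries ℤ) = C 11 := rfl
    rw [h11]
    simp only [map_add, coeff_C_mul, T, S, coeff_mk]
  have h15 : (15 : PowerSeries ℤ) = C 15 := rfl
  have h60 : (60 : PowerSeries ℤ) = C 60 := rfl
  have h3 : (3 : PowerSeries ℤ) = C 3 := rfl
  rw [hTS, h15, h60, h3, map_sub, map_sub, coeff_C_mul, coeff_C_mul, coeff_C_mul,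
    hconv _ _ (by simp), hconv _ _ (by simp)] at h
  simp only [θ, G, coeff_mk] at h
  rw [Nat.cast_sub (by nlinarith)]
  push_cast
  simp only [mul_comm _ (∑ d ∈ Nat.divisors _, (d : ℤ))]
  linear_combination h
end

section
/- Let y₁(q) = q^{11/60}·L₁(q) and y₂(q) = q^{-1/60}·L₂(q) be the two modified Rogers–Ramanujan products (characters of the c = -22/5 minimal models). Their Wronskian with respect to q d/dq satisfies y₁·(q d/dq)y₂ - ((q d/dq)y₁)·y₂ = (-1/5)·q^{1/6}·∏_{n≥1}(1-q^n)⁴ = (-1/5)·η(τ)⁴. -/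
open scoped BigOperators Real

open Complex

/-- Dedekind eta function (q-product form). -/
noncomputable def dedekindEta (τ : ℂ) : ℂ :=
  Complex.exp (2 * π * I * τ / 24) * ∏' n : ℕ, (1 - Complex.exp (2 * π * I * τ) ^ (n + 1))

open Filter Topology

section TripleProduct

lemma HasSum.of_eq {ι : Type*} {f g : ι → ℂ} {a b : ℂ} (h : HasSum f a) (hfg : ∀ i, g i = f i)
    (hab : b = a) : HasSum g b := by
  rw [hab, funext hfg]
  exact h

/-- The finite product `(1 - q)(1 - q²)⋯(1 - qⁿ)`. -/
noncomputable def eulerPartial (q : ℂ) (n : ℕ) : ℂ := ∏ k ∈ Finset.range n, (1 - q ^ (k + 1))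

/-- The infinite product `∏ (1 - qⁿ)` over `n ≥ 1`. -/
noncomputable def eulerProd (q : ℂ) : ℂ := ∏' n : ℕ, (1 - q ^ (n + 1))

/-- The reciprocal of `eulerPartial q m`, extended by zero to negative indices. -/
noncomputable def invEulerPartial (q : ℂ) (m : ℤ) : ℂ :=
  if m < 0 then 0 else (eulerPartial q m.toNat)⁻¹

/-- The Gaussian binomial coefficient `[2n, n + j]`. -/
noncomputable def centralGauss (q : ℂ) (n : ℕ) (j : ℤ) : ℂ :=
  eulerPartial q (2 * n) * (invEulerPartial q (n + j) * invEulerPartial q (n - j))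

lemma one_sub_pow_succ_ne_zero {q : ℂ} (hq : ‖q‖ < 1) (n : ℕ) : 1 - q ^ (n + 1) ≠ 0 := by
  intro h
  have h1 : q ^ (n + 1) = 1 := (sub_eq_zero.mp h).symm
  have h2 := pow_lt_one₀ (norm_nonneg q) hq n.succ_ne_zero
  rw [← norm_pow, h1, norm_one] at h2
  exact lt_irrefl _ h2

lemma eulerPartial_ne_zero {q : ℂ} (hq : ‖q‖ < 1) (n : ℕ) : eulerPartial q n ≠ 0 :=
  Finset.prod_ne_zero_iff.mpr fun k _ => one_sub_pow_succ_ne_zero hq k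

lemma eulerPartial_succ (q : ℂ) (n : ℕ) :
    eulerPartial q (n + 1) = eulerPartial q n * (1 - q ^ (n + 1)) :=
  Finset.prod_range_succ _ _

lemma invEulerPartial_sub_one {q : ℂ} (hq : ‖q‖ < 1) (m : ℤ) :
    invEulerPartial q (m - 1) = (1 - q ^ m) * invEulerPartial q m := by
  rcases lt_trichotomy m 0 with hm | rfl | hm
  · simp [invEulerPartial, hm, show m - 1 < 0 by lia]
  · simp [invEulerPartial]
  · obtain ⟨k, rfl⟩ : ∃ k : ℕ, m = (k : ℤ) + 1 := ⟨(m - 1).toNat, by lia⟩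
    have h1 : ((k : ℤ) + 1).toNat = k + 1 := by lia
    have h2 : ¬ ((k : ℤ) + 1 < 0) := by lia
    have h3 : q ^ ((k : ℤ) + 1) = q ^ (k + 1) := by exact_mod_cast zpow_natCast q (k + 1)
    have h4 := one_sub_pow_succ_ne_zero hq k
    have h5 := eulerPartial_ne_zero hq k
    simp only [invEulerPartial, add_sub_cancel_right, h1, h2, h3, if_false, eulerPartial_succ,
      Int.toNat_natCast, show ¬ ((k : ℤ) < 0) by lia]
    field_simp

lemma centralGauss_zero (q : ℂ) (j : ℤ) : centralGauss q 0 j = if j = 0 then 1 else 0 := by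
  rcases lt_trichotomy j 0 with hj | rfl | hj
  · simp [centralGauss, invEulerPartial, hj, hj.ne]
  · simp [centralGauss, invEulerPartial, eulerPartial]
  · simp [centralGauss, invEulerPartial, hj, hj.ne']

lemma centralGauss_succ {q : ℂ} (hq : ‖q‖ < 1) (hq0 : q ≠ 0) (n : ℕ) (j : ℤ) :
    centralGauss q (n + 1) j = (1 + q ^ (2 * n + 1)) * centralGauss q n j +
      q ^ ((n : ℤ) + 1 - j) * centralGauss q n (j - 1) +
      q ^ ((n : ℤ) + 1 + j) * centralGauss q n (j + 1) := by
  have a1 := invEulerPartial_sub_one hq ((n : ℤ) + 1 + j)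
  have a2 := invEulerPartial_sub_one hq ((n : ℤ) + j)
  have b1 := invEulerPartial_sub_one hq ((n : ℤ) + 1 - j)
  have b2 := invEulerPartial_sub_one hq ((n : ℤ) - j)
  rw [show (n : ℤ) + 1 + j - 1 = n + j by ring] at a1
  rw [show (n : ℤ) + 1 - j - 1 = n - j by ring] at b1
  have hu : q ^ ((n : ℤ) + 1 + j) = q * q ^ ((n : ℤ) + j) := by
    rw [show (n : ℤ) + 1 + j = 1 + (n + j) by ring, zpow_add₀ hq0, zpow_one]
  have hv : q ^ ((n : ℤ) + 1 - j) = q * q ^ ((n : ℤ) - j) := by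
    rw [show (n : ℤ) + 1 - j = 1 + (n - j) by ring, zpow_add₀ hq0, zpow_one]
  have huv : q ^ (2 * n) = q ^ ((n : ℤ) + j) * q ^ ((n : ℤ) - j) := by
    rw [← zpow_add₀ hq0, show (n : ℤ) + j + (n - j) = ((2 * n : ℕ) : ℤ) by push_cast; ring,
      zpow_natCast]
  simp only [centralGauss]
  rw [show 2 * (n + 1) = 2 * n + 1 + 1 by ring, eulerPartial_succ, eulerPartial_succ]
  push_cast
  rw [show (n : ℤ) + (j - 1) = n + j - 1 by ring, show (n : ℤ) - (j - 1) = n + 1 - j by ring,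
    show (n : ℤ) + (j + 1) = n + 1 + j by ring, show (n : ℤ) - (j + 1) = n - j - 1 by ring,
    a2, b2, a1, b1, hu, hv, pow_succ q (2 * n + 1), pow_succ q (2 * n), huv]
  ring

/-- The summand of the finite triple product identity. -/
noncomputable def tripleTerm (x w : ℂ) (n : ℕ) (j : ℤ) : ℂ :=
  centralGauss (x ^ 2) n j * (x ^ (j ^ 2) * w ^ j)

lemma tripleTerm_succ {x w : ℂ} (hx : ‖x‖ < 1) (hx0 : x ≠ 0) (hw : w ≠ 0) (n : ℕ) (j : ℤ) :
    tripleTerm x w (n + 1) j = (1 + (x ^ 2) ^ (2 * n + 1)) * tripleTerm x w n j +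
      x ^ (2 * n + 1) * w * tripleTerm x w n (j - 1) +
      x ^ (2 * n + 1) * w⁻¹ * tripleTerm x w n (j + 1) := by
  have hq : ‖x ^ 2‖ < 1 := by
    rw [norm_pow]; exact pow_lt_one₀ (norm_nonneg x) hx two_ne_zero
  have e1 : (x ^ 2) ^ ((n : ℤ) + 1 - j) * x ^ (j ^ 2) = x ^ (2 * n + 1) * x ^ ((j - 1) ^ 2) := by
    rw [← zpow_natCast x 2, ← zpow_mul, ← zpow_natCast x (2 * n + 1), ← zpow_add₀ hx0,
      ← zpow_add₀ hx0]
    congr 1; push_cast; ring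
  have e2 : (x ^ 2) ^ ((n : ℤ) + 1 + j) * x ^ (j ^ 2) = x ^ (2 * n + 1) * x ^ ((j + 1) ^ 2) := by
    rw [← zpow_natCast x 2, ← zpow_mul, ← zpow_natCast x (2 * n + 1), ← zpow_add₀ hx0,
      ← zpow_add₀ hx0]
    congr 1; push_cast; ring
  have w1 : w ^ j = w * w ^ (j - 1) := by rw [← zpow_one_add₀ hw]; congr 1; ring
  have w2 : w ^ j = w⁻¹ * w ^ (j + 1) := by
    rw [← zpow_neg_one, ← zpow_add₀ hw]; congr 1; ring
  simp only [tripleTerm]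
  rw [centralGauss_succ hq (pow_ne_zero 2 hx0)]
  linear_combination centralGauss (x ^ 2) n (j - 1) * w ^ j * e1 +
    centralGauss (x ^ 2) n (j + 1) * w ^ j * e2 +
    x ^ (2 * n + 1) * x ^ ((j - 1) ^ 2) * centralGauss (x ^ 2) n (j - 1) * w1 +
    x ^ (2 * n + 1) * x ^ ((j + 1) ^ 2) * centralGauss (x ^ 2) n (j + 1) * w2

lemma HasSum.int_sub_one {f : ℤ → ℂ} {a : ℂ} (h : HasSum f a) : HasSum (fun j => f (j - 1)) a :=
  (Equiv.subRight (1 : ℤ)).hasSum_iff.mpr h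

lemma HasSum.int_add_one {f : ℤ → ℂ} {a : ℂ} (h : HasSum f a) : HasSum (fun j => f (j + 1)) a :=
  (Equiv.addRight (1 : ℤ)).hasSum_iff.mpr h

lemma hasSum_tripleTerm {x w : ℂ} (hx : ‖x‖ < 1) (hx0 : x ≠ 0) (hw : w ≠ 0) (n : ℕ) :
    HasSum (tripleTerm x w n)
      (∏ k ∈ Finset.range n, (1 + w * x ^ (2 * k + 1)) * (1 + w⁻¹ * x ^ (2 * k + 1))) := by
  induction n with
  | zero =>
    convert hasSum_single (f := tripleTerm x w 0) 0 ?_ using 1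
    · simp [tripleTerm, centralGauss_zero]
    · intro j hj
      simp [tripleTerm, centralGauss_zero, hj]
  | succ n ih =>
    rw [Finset.prod_range_succ, funext (tripleTerm_succ hx hx0 hw n)]
    refine (((ih.mul_left (1 + (x ^ 2) ^ (2 * n + 1))).add
      (ih.int_sub_one.mul_left (x ^ (2 * n + 1) * w))).add
      (ih.int_add_one.mul_left (x ^ (2 * n + 1) * w⁻¹))).of_eq (fun _ => rfl) ?_
    linear_combination (x ^ (2 * n + 1)) ^ 2 *
      (∏ k ∈ Finset.range n, (1 + w * x ^ (2 * k + 1)) * (1 + w⁻¹ * x ^ (2 * k + 1))) *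
      mul_inv_cancel₀ hw

lemma hasSum_tripleTerm_deriv {x : ℂ} (hx : ‖x‖ < 1) (hx0 : x ≠ 0) (n : ℕ) :
    HasSum (fun j : ℤ => (j : ℂ) * tripleTerm x (-x) (n + 1) j)
      (eulerPartial (x ^ 2) (n + 1) * eulerPartial (x ^ 2) n) := by
  have hw : -x ≠ 0 := neg_ne_zero.mpr hx0
  have key (n : ℕ) {a b : ℂ} (ha : HasSum (tripleTerm x (-x) n) a)
      (hb : HasSum (fun j : ℤ => (j : ℂ) * tripleTerm x (-x) n j) b) :
      HasSum (fun j : ℤ => (j : ℂ) * tripleTerm x (-x) (n + 1) j)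
        ((1 + (x ^ 2) ^ (2 * n + 1)) * b + x ^ (2 * n + 1) * (-x) * (b + a) +
          x ^ (2 * n + 1) * (-x)⁻¹ * (b - a)) := by
    refine (((hb.mul_left (1 + (x ^ 2) ^ (2 * n + 1))).add
      ((hb.int_sub_one.add ha.int_sub_one).mul_left (x ^ (2 * n + 1) * (-x)))).add
      ((hb.int_add_one.sub ha.int_add_one).mul_left
        (x ^ (2 * n + 1) * (-x)⁻¹))).of_eq (fun j => ?_) rfl
    rw [tripleTerm_succ hx hx0 hw]
    push_cast
    ring
  induction n with
  | zero =>
    have hb : HasSum (fun j : ℤ => (j : ℂ) * tripleTerm x (-x) 0 j) 0 := by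
      convert hasSum_zero with j
      by_cases hj : j = 0 <;> simp [tripleTerm, centralGauss_zero, hj]
    convert key 0 (hasSum_tripleTerm hx hx0 hw 0) hb using 1
    simp [eulerPartial]
    field_simp
    ring
  | succ n ih =>
    convert key (n + 1) (hasSum_tripleTerm hx hx0 hw (n + 1)) ih using 1
    rw [Finset.prod_range_succ', eulerPartial_succ _ (n + 1), eulerPartial_succ _ n]
    simp [hx0]
    field_simp
    ring

lemma tendsto_eulerPartial {q : ℂ} (hq : ‖q‖ < 1) :
    Tendsto (eulerPartial q) atTop (𝓝 (eulerProd q)) :=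
  (ModularForm.multipliable_one_sub_pow hq).hasProd.tendsto_prod_nat

lemma eulerProd_ne_zero {q : ℂ} (hq : ‖q‖ < 1) : eulerProd q ≠ 0 := by
  have h : ∏' n : ℕ, (1 + -q ^ (n + 1)) ≠ 0 := by
    refine tprod_one_add_ne_zero_of_summable (fun n => ?_) ?_
    · simpa [← sub_eq_add_neg] using one_sub_pow_succ_ne_zero hq n
    · simpa using (summable_nat_add_iff 1).mpr (summable_geometric_of_lt_one (norm_nonneg q) hq)
  simpa [eulerProd, sub_eq_add_neg] using h

lemma tendsto_inv_eulerPartial {q : ℂ} (hq : ‖q‖ < 1) :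
    Tendsto (fun n => (eulerPartial q n)⁻¹) atTop (𝓝 (eulerProd q)⁻¹) :=
  (tendsto_eulerPartial hq).inv₀ (eulerProd_ne_zero hq)

lemma exists_norm_le_of_tendsto {u : ℕ → ℂ} {a : ℂ} (h : Tendsto u atTop (𝓝 a)) :
    ∃ M : ℝ, 0 ≤ M ∧ ∀ n, ‖u n‖ ≤ M := by
  obtain ⟨M, hM⟩ := (Metric.isBounded_range_of_tendsto u h).exists_norm_le
  exact ⟨M, (norm_nonneg (u 0)).trans (hM _ ⟨0, rfl⟩), fun n => hM _ ⟨n, rfl⟩⟩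

lemma exists_norm_centralGauss_le {q : ℂ} (hq : ‖q‖ < 1) :
    ∃ M : ℝ, ∀ n j, ‖centralGauss q n j‖ ≤ M := by
  obtain ⟨M, hM0, hM⟩ := exists_norm_le_of_tendsto (tendsto_eulerPartial hq)
  obtain ⟨N, hN0, hN⟩ := exists_norm_le_of_tendsto (tendsto_inv_eulerPartial hq)
  have hR (m : ℤ) : ‖invEulerPartial q m‖ ≤ N := by
    unfold invEulerPartial
    split_ifs
    · simpa using hN0
    · exact hN _
  refine ⟨M * (N * N), fun n j => ?_⟩
  rw [centralGauss, norm_mul, norm_mul]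
  gcongr
  exacts [hM _, hR _, hR _]

lemma tendsto_invEulerPartial {q : ℂ} (hq : ‖q‖ < 1) {u : ℕ → ℤ} (hu : Tendsto u atTop atTop) :
    Tendsto (fun n => invEulerPartial q (u n)) atTop (𝓝 (eulerProd q)⁻¹) := by
  have h1 : Tendsto (fun n => (u n).toNat) atTop atTop := by
    rw [tendsto_atTop] at hu ⊢
    intro b
    filter_upwards [hu b] with n hn
    lia
  refine ((tendsto_inv_eulerPartial hq).comp h1).congr' ?_
  filter_upwards [hu.eventually_ge_atTop 0] with n hn
  simp [invEulerPartial, not_lt.mpr hn]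

lemma tendsto_centralGauss {q : ℂ} (hq : ‖q‖ < 1) (j : ℤ) :
    Tendsto (fun n => centralGauss q n j) atTop (𝓝 (eulerProd q)⁻¹) := by
  have h1 : Tendsto (fun n : ℕ => 2 * n) atTop atTop :=
    tendsto_id.const_mul_atTop' two_pos
  have h2 : Tendsto (fun n : ℕ => (n : ℤ) + j) atTop atTop :=
    tendsto_atTop_add_const_right _ _ tendsto_natCast_atTop_atTop
  have h3 : Tendsto (fun n : ℕ => (n : ℤ) - j) atTop atTop :=
    tendsto_atTop_add_const_right _ _ tendsto_natCast_atTop_atTop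
  have h4 : (eulerProd q)⁻¹ = eulerProd q * ((eulerProd q)⁻¹ * (eulerProd q)⁻¹) := by
    rw [mul_inv_cancel_left₀ (eulerProd_ne_zero hq)]
  rw [h4]
  exact ((tendsto_eulerPartial hq).comp h1).mul
    ((tendsto_invEulerPartial hq h2).mul (tendsto_invEulerPartial hq h3))

lemma tendsto_tsum_centralGauss {q : ℂ} (hq : ‖q‖ < 1) {g : ℤ → ℂ} (hg : Summable g) :
    Tendsto (fun n => ∑' j, centralGauss q n j * g j) atTop
      (𝓝 ((eulerProd q)⁻¹ * ∑' j, g j)) := by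
  obtain ⟨M, hM⟩ := exists_norm_centralGauss_le hq
  rw [← tsum_mul_left]
  refine tendsto_tsum_of_dominated_convergence (hg.norm.mul_left M)
    (fun j => (tendsto_centralGauss hq j).mul_const (g j)) (Eventually.of_forall fun n j => ?_)
  rw [norm_mul]
  gcongr
  exact hM n j

lemma jacobiTheta₂_term_eq_zpow (j : ℤ) (z τ : ℂ) :
    jacobiTheta₂_term j z τ = cexp (π * I * τ) ^ (j ^ 2) * cexp (2 * π * I * z) ^ j := by
  rw [jacobiTheta₂_term, ← exp_int_mul, ← exp_int_mul, ← Complex.exp_add]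
  congr 1
  push_cast
  ring

lemma norm_cexp_pi_mul_I_lt_one {τ : ℂ} (hτ : 0 < τ.im) : ‖cexp (π * I * τ)‖ < 1 := by
  rw [Complex.norm_exp, Real.exp_lt_one_iff]
  have : (π * I * τ : ℂ).re = -(π * τ.im) := by simp
  rw [this]
  exact neg_neg_of_pos (mul_pos Real.pi_pos hτ)

lemma cexp_pi_mul_I_sq (τ : ℂ) : cexp (π * I * τ) ^ 2 = cexp (2 * π * I * τ) := by
  rw [← Complex.exp_nat_mul]
  congr 1
  push_cast
  ring

lemma norm_cexp_two_pi_mul_I_lt_one {τ : ℂ} (hτ : 0 < τ.im) : ‖cexp (2 * π * I * τ)‖ < 1 := by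
  rw [← cexp_pi_mul_I_sq, norm_pow]
  exact pow_lt_one₀ (norm_nonneg _) (norm_cexp_pi_mul_I_lt_one hτ) two_ne_zero

/-- The Jacobi triple product identity. -/
theorem tendsto_prod_jacobiTheta₂ (z : ℂ) {τ : ℂ} (hτ : 0 < τ.im) :
    Tendsto (fun n => ∏ k ∈ Finset.range n,
      (1 + cexp (2 * π * I * z) * cexp (π * I * τ) ^ (2 * k + 1)) *
      (1 + (cexp (2 * π * I * z))⁻¹ * cexp (π * I * τ) ^ (2 * k + 1))) atTop
      (𝓝 ((eulerProd (cexp (2 * π * I * τ)))⁻¹ * jacobiTheta₂ z τ)) := by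
  have h := tendsto_tsum_centralGauss (norm_cexp_two_pi_mul_I_lt_one hτ)
    (hasSum_jacobiTheta₂_term z hτ).summable
  refine h.congr fun n => ?_
  rw [← (hasSum_tripleTerm (norm_cexp_pi_mul_I_lt_one hτ) (exp_ne_zero _)
    (exp_ne_zero (2 * π * I * z)) n).tsum_eq]
  simp_rw [tripleTerm, jacobiTheta₂_term_eq_zpow, cexp_pi_mul_I_sq]

lemma summable_pow_mul_jacobiTheta₂_term (p : ℕ) (z : ℂ) {τ : ℂ} (hτ : 0 < τ.im) :
    Summable fun j : ℤ => (j : ℂ) ^ p * jacobiTheta₂_term j z τ := by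
  refine (summable_pow_mul_jacobiTheta₂_term_bound |z.im| hτ p).of_norm_bounded fun j => ?_
  rw [norm_mul, norm_pow, norm_intCast, Int.cast_abs]
  gcongr
  exact_mod_cast norm_jacobiTheta₂_term_le hτ le_rfl le_rfl j

lemma cexp_jacobi_half (τ : ℂ) : cexp (2 * π * I * (1 / 2 + τ / 2)) = -cexp (π * I * τ) := by
  rw [show 2 * π * I * (1 / 2 + τ / 2) = π * I + π * I * τ by ring, Complex.exp_add, exp_pi_mul_I,
    neg_one_mul]

lemma jacobiTheta₂_half_add_half {τ : ℂ} (hτ : 0 < τ.im) : jacobiTheta₂ (1 / 2 + τ / 2) τ = 0 := by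
  have h := tendsto_prod_jacobiTheta₂ (1 / 2 + τ / 2) hτ
  have h0 : (eulerProd (cexp (2 * π * I * τ)))⁻¹ * jacobiTheta₂ (1 / 2 + τ / 2) τ = 0 := by
    refine tendsto_nhds_unique h (tendsto_const_nhds.congr' ?_)
    filter_upwards [eventually_ge_atTop 1] with n hn
    refine (Finset.prod_eq_zero (Finset.mem_range.mpr hn) ?_).symm
    rw [cexp_jacobi_half]
    simp
  exact (mul_eq_zero.mp h0).resolve_left
    (inv_ne_zero (eulerProd_ne_zero (norm_cexp_two_pi_mul_I_lt_one hτ)))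

/-- Jacobi's identity for the cube of the Euler product. -/
theorem tsum_int_mul_jacobiTheta₂_term {τ : ℂ} (hτ : 0 < τ.im) :
    ∑' j : ℤ, (j : ℂ) * jacobiTheta₂_term j (1 / 2 + τ / 2) τ =
      eulerProd (cexp (2 * π * I * τ)) ^ 3 := by
  have hq := norm_cexp_two_pi_mul_I_lt_one hτ
  have hs := summable_pow_mul_jacobiTheta₂_term 1 (1 / 2 + τ / 2) hτ
  simp_rw [pow_one] at hs
  have h := (tendsto_tsum_centralGauss hq hs).comp (tendsto_add_atTop_nat 1)
  have h2 := ((tendsto_eulerPartial hq).comp (tendsto_add_atTop_nat 1)).mul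
    (tendsto_eulerPartial hq)
  have h3 := tendsto_nhds_unique h (h2.congr fun n => ?_)
  · rw [inv_mul_eq_iff_eq_mul₀ (eulerProd_ne_zero hq)] at h3
    rw [h3]
    ring
  · have := (hasSum_tripleTerm_deriv (norm_cexp_pi_mul_I_lt_one hτ) (exp_ne_zero _) n).tsum_eq
    rw [cexp_pi_mul_I_sq] at this
    simp only [Function.comp_apply]
    rw [← this]
    refine tsum_congr fun j => ?_
    rw [tripleTerm, jacobiTheta₂_term_eq_zpow, cexp_pi_mul_I_sq, cexp_jacobi_half]
    ring

end TripleProduct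

section LatticeSums

lemma neg_one_zpow_add_two_mul (b c : ℤ) : (-1 : ℂ) ^ (b + 2 * c) = (-1) ^ b := by
  rw [zpow_add₀ (by norm_num), zpow_mul]
  simp

/-- Summand of the theta series over odd integers `2k + 1`, weighted by `(2k + 1) ^ p`. -/
noncomputable def oddThetaTerm (p : ℕ) (τ : ℂ) (k : ℤ) : ℂ :=
  (2 * k + 1 : ℂ) ^ p * ((-1) ^ k * cexp (2 * π * I * τ * ((2 * k + 1 : ℂ) ^ 2 / 8)))

lemma cexp_int_mul_pi_mul_I (k : ℤ) : cexp (k * (π * I)) = (-1) ^ k := by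
  rw [exp_int_mul, exp_pi_mul_I]

lemma oddThetaTerm_eq (p : ℕ) (τ : ℂ) (k : ℤ) :
    oddThetaTerm p τ k = (2 * k + 1 : ℂ) ^ p *
      (cexp (2 * π * I * τ / 8) * jacobiTheta₂_term k (1 / 2 + τ / 2) τ) := by
  rw [oddThetaTerm, jacobiTheta₂_term, ← cexp_int_mul_pi_mul_I, ← Complex.exp_add,
    ← Complex.exp_add]
  congr 2
  ring

lemma hasSum_oddThetaTerm_zero {τ : ℂ} (hτ : 0 < τ.im) : HasSum (oddThetaTerm 0 τ) 0 := by
  refine ((hasSum_jacobiTheta₂_term (1 / 2 + τ / 2) hτ).mul_left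
    (cexp (2 * π * I * τ / 8))).of_eq (fun k => ?_) ?_
  · rw [oddThetaTerm_eq, pow_zero, one_mul]
  · rw [jacobiTheta₂_half_add_half hτ, mul_zero]

lemma dedekindEta_eq (τ : ℂ) :
    dedekindEta τ = cexp (2 * π * I * τ / 24) * eulerProd (cexp (2 * π * I * τ)) := rfl

lemma hasSum_oddThetaTerm_one {τ : ℂ} (hτ : 0 < τ.im) :
    HasSum (oddThetaTerm 1 τ) (2 * dedekindEta τ ^ 3) := by
  have hs := summable_pow_mul_jacobiTheta₂_term 1 (1 / 2 + τ / 2) hτ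
  simp_rw [pow_one] at hs
  refine ((hs.hasSum.mul_left 2).mul_left (cexp (2 * π * I * τ / 8)) |>.add
    (hasSum_oddThetaTerm_zero hτ)).of_eq (fun k => ?_) ?_
  · rw [oddThetaTerm_eq, oddThetaTerm_eq]
    ring
  · rw [tsum_int_mul_jacobiTheta₂_term hτ, dedekindEta_eq, mul_pow, ← Complex.exp_nat_mul,
      show ((3 : ℕ) : ℂ) * (2 * π * I * τ / 24) = 2 * π * I * τ / 8 by push_cast; ring]
    ring

lemma summable_oddThetaTerm_two {τ : ℂ} (hτ : 0 < τ.im) : Summable (oddThetaTerm 2 τ) := by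
  have h2 := (summable_pow_mul_jacobiTheta₂_term 2 (1 / 2 + τ / 2) hτ).mul_left 4
  have h1 := (summable_pow_mul_jacobiTheta₂_term 1 (1 / 2 + τ / 2) hτ).mul_left 4
  have h0 := summable_pow_mul_jacobiTheta₂_term 0 (1 / 2 + τ / 2) hτ
  refine (((h2.add h1).add h0).mul_left (cexp (2 * π * I * τ / 8))).congr fun k => ?_
  rw [oddThetaTerm_eq]
  ring

lemma HasSum.mul_prod {f g : ℤ → ℂ} {a b : ℂ} (hf : HasSum f a) (hg : HasSum g b) :
    HasSum (fun p : ℤ × ℤ => f p.1 * g p.2) (a * b) :=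
  hf.mul hg (summable_mul_of_summable_norm hf.summable.norm hg.summable.norm)

lemma hasSum_oddThetaTerm_sq_sub_sq {τ : ℂ} (hτ : 0 < τ.im) :
    HasSum (fun p : ℤ × ℤ => oddThetaTerm 2 τ p.1 * oddThetaTerm 0 τ p.2 -
      oddThetaTerm 0 τ p.1 * oddThetaTerm 2 τ p.2) 0 := by
  have h0 := hasSum_oddThetaTerm_zero hτ
  have h2 := (summable_oddThetaTerm_two hτ).hasSum
  exact ((h2.mul_prod h0).sub (h0.mul_prod h2)).of_eq (fun _ => rfl) (by ring)

/-- The summand over pairs of odd integers `A = 2k + 1`, `B = 2l + 1` that is invariant under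
the rotation `(A, B) ↦ (-B, A)`. -/
noncomputable def oddPairTerm (τ : ℂ) (p : ℤ × ℤ) : ℂ :=
  (-1) ^ (p.1 + p.2) * (8 * ((2 * p.1 + 1) * (2 * p.2 + 1)) -
    3 * ((2 * p.1 + 1) ^ 2 - (2 * p.2 + 1) ^ 2)) *
    cexp (2 * π * I * τ * (((2 * p.1 + 1) ^ 2 + (2 * p.2 + 1) ^ 2) / 8))

lemma oddPairTerm_eq (τ : ℂ) (p : ℤ × ℤ) :
    oddPairTerm τ p = 8 * (oddThetaTerm 1 τ p.1 * oddThetaTerm 1 τ p.2) -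
      3 * (oddThetaTerm 2 τ p.1 * oddThetaTerm 0 τ p.2 -
        oddThetaTerm 0 τ p.1 * oddThetaTerm 2 τ p.2) := by
  simp only [oddPairTerm, oddThetaTerm]
  rw [zpow_add₀ (by norm_num : (-1 : ℂ) ≠ 0), add_div, mul_add (2 * π * I * τ),
    Complex.exp_add]
  ring

lemma hasSum_oddPairTerm {τ : ℂ} (hτ : 0 < τ.im) :
    HasSum (oddPairTerm τ) (32 * dedekindEta τ ^ 6) := by
  have h1 := hasSum_oddThetaTerm_one hτ
  refine (((h1.mul_prod h1).mul_left 8).sub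
    ((hasSum_oddThetaTerm_sq_sub_sq hτ).mul_left 3)).of_eq (oddPairTerm_eq τ) ?_
  ring

/-- The rotation `(A, B) ↦ (-B, A)` in the coordinates `A = 2k + 1`, `B = 2l + 1`. -/
def rotOddPair : ℤ × ℤ ≃ ℤ × ℤ where
  toFun p := (-p.2 - 1, p.1)
  invFun p := (p.2, -p.1 - 1)
  left_inv p := by simp
  right_inv p := by simp

lemma oddPairTerm_rotOddPair (τ : ℂ) (p : ℤ × ℤ) :
    oddPairTerm τ (rotOddPair p) = oddPairTerm τ p := by
  obtain ⟨k, l⟩ := p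
  simp only [oddPairTerm, rotOddPair, Equiv.coe_fn_mk]
  rw [show -l - 1 + k = k + l + 1 + 2 * (-l - 1) by ring, neg_one_zpow_add_two_mul,
    zpow_add_one₀ (by norm_num)]
  push_cast
  rw [show (2 * (-(l : ℂ) - 1) + 1) ^ 2 + (2 * (k : ℂ) + 1) ^ 2 =
    (2 * (k : ℂ) + 1) ^ 2 + (2 * (l : ℂ) + 1) ^ 2 by ring]
  ring

/-- Multiplication by `1 + 2i` in the coordinates `A = 2k + 1`, `B = 2l + 1`. -/
def mulOddPair (p : ℤ × ℤ) : ℤ × ℤ := (p.1 - 2 * p.2 - 1, 2 * p.1 + p.2 + 1)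

/-- The parametrization of the pairs of odd integers with `A + 2B ≡ 1 mod 5`. -/
def offsetOddPair (p : ℤ × ℤ) : ℤ × ℤ := (p.1 - 2 * p.2 - 1, 2 * p.1 + p.2)

lemma oddPairTerm_mulOddPair (τ : ℂ) (p : ℤ × ℤ) :
    oddPairTerm τ (mulOddPair p) =
      25 * (oddThetaTerm 2 (5 * τ) p.1 * oddThetaTerm 0 (5 * τ) p.2 -
        oddThetaTerm 0 (5 * τ) p.1 * oddThetaTerm 2 (5 * τ) p.2) := by
  obtain ⟨u, v⟩ := p
  simp only [oddPairTerm, mulOddPair, oddThetaTerm]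
  rw [show u - 2 * v - 1 + (2 * u + v + 1) = u + v + 2 * (u - v) by ring,
    neg_one_zpow_add_two_mul, zpow_add₀ (by norm_num : (-1 : ℂ) ≠ 0)]
  push_cast
  rw [show 2 * π * I * τ * (((2 * ((u : ℂ) - 2 * v - 1) + 1) ^ 2 +
      (2 * (2 * (u : ℂ) + v + 1) + 1) ^ 2) / 8) =
      2 * π * I * (5 * τ) * ((2 * (u : ℂ) + 1) ^ 2 / 8) +
      2 * π * I * (5 * τ) * ((2 * (v : ℂ) + 1) ^ 2 / 8) by ring, Complex.exp_add]
  ring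

lemma oddPairTerm_offsetOddPair (τ : ℂ) (p : ℤ × ℤ) :
    oddPairTerm τ (offsetOddPair p) =
      (-1) ^ p.1 * (-1) ^ p.2 * ((10 * p.2 + 3) ^ 2 - (10 * p.1 + 1) ^ 2) *
        (cexp (2 * π * I * τ * ((10 * p.1 + 1) ^ 2 / 40)) *
          cexp (2 * π * I * τ * ((10 * p.2 + 3) ^ 2 / 40))) := by
  obtain ⟨m, n⟩ := p
  simp only [oddPairTerm, offsetOddPair]
  rw [show m - 2 * n - 1 + (2 * m + n) = m + n + 1 + 2 * (m - n - 1) by ring,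
    neg_one_zpow_add_two_mul, zpow_add_one₀ (by norm_num), zpow_add₀ (by norm_num : (-1 : ℂ) ≠ 0),
    ← Complex.exp_add]
  push_cast
  rw [show 2 * π * I * τ * (((2 * ((m : ℂ) - 2 * n - 1) + 1) ^ 2 +
      (2 * (2 * (m : ℂ) + n) + 1) ^ 2) / 8) =
      2 * π * I * τ * ((10 * (m : ℂ) + 1) ^ 2 / 40) +
      2 * π * I * τ * ((10 * (n : ℂ) + 3) ^ 2 / 40) by ring]
  ring

lemma hasSum_ite_of_range {g : ℤ × ℤ → ℤ × ℤ} (hg : Function.Injective g) {P : ℤ × ℤ → Prop}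
    [DecidablePred P] (hP : ∀ p, P p ↔ p ∈ Set.range g) {f : ℤ × ℤ → ℂ} {a : ℂ}
    (h : HasSum (fun p => f (g p)) a) : HasSum (fun p => if P p then f p else 0) a := by
  refine (hg.hasSum_iff fun p hp => if_neg fun h => hp ((hP p).mp h)).mp (h.of_eq ?_ rfl)
  intro p
  exact if_pos ((hP _).mpr ⟨p, rfl⟩)

lemma hasSum_ite_mulOddPair {f : ℤ × ℤ → ℂ} {a : ℂ} (h : HasSum (fun p => f (mulOddPair p)) a) :
    HasSum (fun p : ℤ × ℤ => if (p.1 + 2 * p.2 - 1) % 5 = 0 then f p else 0) a := by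
  refine hasSum_ite_of_range ?_ ?_ h
  · rintro ⟨u, v⟩ ⟨u', v'⟩ h
    simp only [mulOddPair, Prod.mk.injEq] at h ⊢
    lia
  · rintro ⟨k, l⟩
    simp only [mulOddPair, Set.mem_range, Prod.mk.injEq, Prod.exists]
    constructor
    · intro h
      exact ⟨(k + 2 * l - 1) / 5, l - 1 - 2 * ((k + 2 * l - 1) / 5), by lia, by lia⟩
    · rintro ⟨u, v, rfl, rfl⟩
      lia

lemma hasSum_ite_offsetOddPair {f : ℤ × ℤ → ℂ} {a : ℂ}
    (h : HasSum (fun p => f (offsetOddPair p)) a) :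
    HasSum (fun p : ℤ × ℤ => if (p.1 + 2 * p.2 - 1) % 5 = 3 then f p else 0) a := by
  refine hasSum_ite_of_range ?_ ?_ h
  · rintro ⟨u, v⟩ ⟨u', v'⟩ h
    simp only [offsetOddPair, Prod.mk.injEq] at h ⊢
    lia
  · rintro ⟨k, l⟩
    simp only [offsetOddPair, Set.mem_range, Prod.mk.injEq, Prod.exists]
    constructor
    · intro h
      exact ⟨(k + 2 * l + 1) / 5, l - 2 * ((k + 2 * l + 1) / 5), by lia, by lia⟩
    · rintro ⟨u, v, rfl, rfl⟩
      lia

lemma hasSum_ite_rotOddPair {f : ℤ × ℤ → ℂ} (hf : ∀ p, f (rotOddPair p) = f p) {r s : ℤ}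
    (hrs : ∀ t : ℤ, (2 * t) % 5 = r ↔ t % 5 = s) {a : ℂ}
    (h : HasSum (fun p : ℤ × ℤ => if (p.1 + 2 * p.2 - 1) % 5 = r then f p else 0) a) :
    HasSum (fun p : ℤ × ℤ => if (p.1 + 2 * p.2 - 1) % 5 = s then f p else 0) a := by
  refine (rotOddPair.hasSum_iff.mpr h).of_eq (fun p => ?_) rfl
  have h1 : ((rotOddPair p).1 + 2 * (rotOddPair p).2 - 1) % 5 = r ↔
      (p.1 + 2 * p.2 - 1) % 5 = s := by
    rw [← hrs]
    simp only [rotOddPair, Equiv.coe_fn_mk]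
    lia
  simp only [Function.comp_apply, h1, hf]

/-- A rotation invariant function summed over all residue classes of `A + 2B` mod 5. -/
lemma hasSum_of_rotOddPair_invariant {f : ℤ × ℤ → ℂ} (hf : ∀ p, f (rotOddPair p) = f p) {a b : ℂ}
    (ha : HasSum (fun p => f (mulOddPair p)) a) (hb : HasSum (fun p => f (offsetOddPair p)) b) :
    HasSum f (a + 4 * b) := by
  have h0 := hasSum_ite_mulOddPair ha
  have h3 := hasSum_ite_offsetOddPair hb
  have h4 := hasSum_ite_rotOddPair hf (s := 4) (by lia) h3
  have h2 := hasSum_ite_rotOddPair hf (s := 2) (by lia) h4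
  have h1 := hasSum_ite_rotOddPair hf (s := 1) (by lia) h2
  refine (h0.add (h1.add (h2.add (h3.add h4)))).of_eq (fun p => ?_) (by ring)
  generalize (p.1 + 2 * p.2 - 1) = t
  have : t % 5 = 0 ∨ t % 5 = 1 ∨ t % 5 = 2 ∨ t % 5 = 3 ∨ t % 5 = 4 := by lia
  rcases this with h | h | h | h | h <;> simp [h]

lemma hasSum_offsetOddPair_unique {τ : ℂ} (hτ : 0 < τ.im) {b : ℂ}
    (hb : HasSum (fun p => oddPairTerm τ (offsetOddPair p)) b) : b = 8 * dedekindEta τ ^ 6 := by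
  have h5 : 0 < (5 * τ).im := by simpa using hτ
  have ha : HasSum (fun p => oddPairTerm τ (mulOddPair p)) 0 :=
    ((hasSum_oddThetaTerm_sq_sub_sq h5).mul_left 25).of_eq (oddPairTerm_mulOddPair τ) (by ring)
  have h := (hasSum_of_rotOddPair_invariant (oddPairTerm_rotOddPair τ) ha hb).unique
    (hasSum_oddPairTerm hτ)
  linear_combination h / 4

end LatticeSums

section RogersRamanujan

/-- The theta series `∑ (-1)ʲ q ^ ((10j + c)² / 40)`. -/
noncomputable def thetaFive (c τ : ℂ) : ℂ :=
  cexp (2 * π * I * τ * (c ^ 2 / 40)) * jacobiTheta₂ (1 / 2 + c / 2 * τ) (5 * τ)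

/-- Summand of `thetaFive`. -/
noncomputable def thetaFiveTerm (c τ : ℂ) (j : ℤ) : ℂ :=
  (-1) ^ j * cexp (2 * π * I * τ * ((10 * j + c) ^ 2 / 40))

lemma thetaFiveTerm_eq (c τ : ℂ) (j : ℤ) : thetaFiveTerm c τ j =
    cexp (2 * π * I * τ * (c ^ 2 / 40)) * jacobiTheta₂_term j (1 / 2 + c / 2 * τ) (5 * τ) := by
  rw [thetaFiveTerm, jacobiTheta₂_term, ← cexp_int_mul_pi_mul_I, ← Complex.exp_add,
    ← Complex.exp_add]
  congr 1
  ring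

lemma hasSum_thetaFiveTerm (c : ℂ) {τ : ℂ} (hτ : 0 < τ.im) :
    HasSum (thetaFiveTerm c τ) (thetaFive c τ) := by
  have h5 : 0 < (5 * τ).im := by simpa using hτ
  exact ((hasSum_jacobiTheta₂_term _ h5).mul_left _).of_eq (thetaFiveTerm_eq c τ) rfl

lemma exists_hasDerivAt_jacobiTheta₂_comp (b c d : ℂ) {τ : ℂ} (h5 : 0 < (d * τ).im) :
    ∃ e : ℂ, HasDerivAt (fun t : ℂ => jacobiTheta₂ (b + c * t) (d * t)) e τ ∧
      HasSum (fun j : ℤ => jacobiTheta₂_term j (b + c * τ) (d * τ) *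
        (2 * π * I * (j * c + j ^ 2 * d / 2))) e := by
  have h1 : HasDerivAt (fun t : ℂ => b + c * t) c τ := by
    simpa using ((hasDerivAt_id τ).const_mul c).const_add b
  have h2 : HasDerivAt (fun t : ℂ => d * t) d τ := by
    simpa using (hasDerivAt_id τ).const_mul d
  have hF := hasFDerivAt_jacobiTheta₂ (b + c * τ) h5
  have hJ : HasDerivAt (fun t : ℂ => jacobiTheta₂ (b + c * t) (d * t))
      (jacobiTheta₂_fderiv (b + c * τ) (d * τ) (c, d)) τ :=
    HasFDerivAt.comp_hasDerivAt (l := fun p : ℂ × ℂ => jacobiTheta₂ p.1 p.2)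
      (f := fun t : ℂ => ((b + c * t, d * t) : ℂ × ℂ)) τ hF (h1.prodMk h2)
  have hS := (ContinuousLinearMap.apply ℂ ℂ ((c, d) : ℂ × ℂ)).hasSum
    (hasSum_jacobiTheta₂_term_fderiv (b + c * τ) h5)
  refine ⟨_, hJ, hS.of_eq (fun j => ?_) rfl⟩
  simp only [jacobiTheta₂_term_fderiv, jacobiTheta₂_term, ContinuousLinearMap.apply_apply,
    FunLike.coe_smul, Pi.smul_apply, add_apply,
    ContinuousLinearMap.coe_fst', ContinuousLinearMap.coe_snd', smul_eq_mul]
  ring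

lemma exists_hasDerivAt_thetaFive (c : ℂ) {τ : ℂ} (hτ : 0 < τ.im) :
    ∃ d : ℂ, HasDerivAt (thetaFive c) (2 * π * I * d) τ ∧
      HasSum (fun j : ℤ => (10 * j + c) ^ 2 / 40 * thetaFiveTerm c τ j) d := by
  have h5 : 0 < (5 * τ).im := by simpa using hτ
  obtain ⟨e, hJ, hS⟩ := exists_hasDerivAt_jacobiTheta₂_comp (1 / 2) (c / 2) 5 h5
  have hE : HasDerivAt (fun t : ℂ => cexp (2 * π * I * t * (c ^ 2 / 40)))
      (cexp (2 * π * I * τ * (c ^ 2 / 40)) * (2 * π * I * (c ^ 2 / 40))) τ := by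
    have h1 : HasDerivAt (fun t : ℂ => 2 * π * I * t * (c ^ 2 / 40))
        (2 * π * I * (c ^ 2 / 40)) τ := by
      simpa using ((hasDerivAt_id τ).const_mul (2 * π * I)).mul_const (c ^ 2 / 40)
    exact h1.cexp
  have hpi := two_pi_I_ne_zero
  have hT := (hasSum_jacobiTheta₂_term (1 / 2 + c / 2 * τ) h5).mul_left
    (cexp (2 * π * I * τ * (c ^ 2 / 40)) * (2 * π * I * (c ^ 2 / 40)))
  refine ⟨_, ?_, ((hT.add (hS.mul_left (cexp (2 * π * I * τ * (c ^ 2 / 40))))).mul_left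
      (2 * π * I)⁻¹).of_eq (fun j => ?_) rfl⟩
  · rw [mul_inv_cancel_left₀ hpi]
    exact hE.mul hJ
  · rw [thetaFiveTerm_eq, eq_inv_mul_iff_mul_eq₀ hpi]
    ring

lemma eulerPartial_five_mul (q : ℂ) (n : ℕ) : eulerPartial q (5 * n) =
    eulerPartial (q ^ 5) n * ∏ k ∈ Finset.range n, ((1 - q ^ (5 * k + 1)) * (1 - q ^ (5 * k + 2)) *
      ((1 - q ^ (5 * k + 3)) * (1 - q ^ (5 * k + 4)))) := by
  induction n with
  | zero => simp [eulerPartial]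
  | succ n ih =>
    rw [show 5 * (n + 1) = 5 * n + 1 + 1 + 1 + 1 + 1 by ring]
    simp only [eulerPartial_succ, ih, Finset.prod_range_succ]
    rw [← pow_mul]
    ring

lemma summable_norm_pow_five_mul {q : ℂ} (hq : ‖q‖ < 1) (c : ℕ) :
    Summable fun n : ℕ => ‖-q ^ (5 * n + c)‖ := by
  simp_rw [norm_neg, norm_pow, pow_add, pow_mul]
  exact (summable_geometric_of_lt_one (by positivity)
    (pow_lt_one₀ (norm_nonneg q) hq (by norm_num))).mul_right _

lemma one_sub_pow_five_mul_ne_zero {q : ℂ} (hq : ‖q‖ < 1) {c : ℕ} (hc : 0 < c) (n : ℕ) :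
    1 - q ^ (5 * n + c) ≠ 0 := by
  obtain ⟨d, rfl⟩ := Nat.exists_eq_succ_of_ne_zero hc.ne'
  exact one_sub_pow_succ_ne_zero hq (5 * n + d)

lemma exists_hasProd_one_sub_pow_five_mul {q : ℂ} (hq : ‖q‖ < 1) {c : ℕ} (hc : 0 < c) :
    ∃ a ≠ 0, HasProd (fun n : ℕ => 1 - q ^ (5 * n + c)) a := by
  have h := summable_norm_pow_five_mul hq c
  refine ⟨∏' n : ℕ, (1 + -q ^ (5 * n + c)), tprod_one_add_ne_zero_of_summable (fun n => ?_) h, ?_⟩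
  · simpa [← sub_eq_add_neg] using one_sub_pow_five_mul_ne_zero hq hc n
  · simpa only [← sub_eq_add_neg] using (multipliable_one_add_of_summable h).hasProd

lemma tprod_inv_eq_of_tendsto {q θ : ℂ} (hq : ‖q‖ < 1) {a b c d : ℕ} (hc : 0 < c) (hd : 0 < d)
    (hperm : ∀ k : ℕ, (1 - q ^ (5 * k + 1)) * (1 - q ^ (5 * k + 2)) *
      ((1 - q ^ (5 * k + 3)) * (1 - q ^ (5 * k + 4))) =
      (1 - q ^ (5 * k + a)) * (1 - q ^ (5 * k + b)) *
      ((1 - q ^ (5 * k + c)) * (1 - q ^ (5 * k + d))))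
    (h : Tendsto (fun n => ∏ k ∈ Finset.range n, (1 - q ^ (5 * k + a)) * (1 - q ^ (5 * k + b)))
      atTop (𝓝 ((eulerProd (q ^ 5))⁻¹ * θ))) :
    ∏' n : ℕ, ((1 - q ^ (5 * n + c)) * (1 - q ^ (5 * n + d)))⁻¹ = θ / eulerProd q := by
  obtain ⟨s, hs0, hs⟩ := exists_hasProd_one_sub_pow_five_mul hq hc
  obtain ⟨t, ht0, ht⟩ := exists_hasProd_one_sub_pow_five_mul hq hd
  have hq5 : ‖q ^ 5‖ < 1 := by
    rw [norm_pow]; exact pow_lt_one₀ (norm_nonneg q) hq (by norm_num)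
  have h5 : Tendsto (fun n : ℕ => 5 * n) atTop atTop := tendsto_id.const_mul_atTop' (by norm_num)
  have hst := (hs.mul ht).tendsto_prod_nat
  have e : eulerProd q = eulerProd (q ^ 5) * ((eulerProd (q ^ 5))⁻¹ * θ * (s * t)) := by
    refine tendsto_nhds_unique ((tendsto_eulerPartial hq).comp h5)
      (((tendsto_eulerPartial hq5).mul (h.mul hst)).congr fun n => ?_)
    rw [Function.comp_apply, eulerPartial_five_mul, ← Finset.prod_mul_distrib]
    simp_rw [hperm]
  have hp : HasProd (fun n : ℕ => ((1 - q ^ (5 * n + c)) * (1 - q ^ (5 * n + d)))⁻¹) (s * t)⁻¹ :=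
    (hs.mul ht).inv₀ (mul_ne_zero hs0 ht0)
  rw [hp.tprod_eq]
  rw [mul_assoc, mul_inv_cancel_left₀ (eulerProd_ne_zero hq5)] at e
  rw [eq_div_iff (eulerProd_ne_zero hq), inv_mul_eq_iff_eq_mul₀ (mul_ne_zero hs0 ht0), e, mul_comm]

lemma tendsto_prod_thetaFive {a b c : ℕ} (ha : 5 + c = 2 * a) (hb : 2 * b + c = 5) {τ : ℂ}
    (hτ : 0 < τ.im) :
    Tendsto (fun n => ∏ k ∈ Finset.range n, (1 - cexp (2 * π * I * τ) ^ (5 * k + a)) *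
      (1 - cexp (2 * π * I * τ) ^ (5 * k + b))) atTop
      (𝓝 ((eulerProd (cexp (2 * π * I * τ) ^ 5))⁻¹ *
        jacobiTheta₂ (1 / 2 + c / 2 * τ) (5 * τ))) := by
  have h5 : 0 < (5 * τ).im := by simpa using hτ
  have h := tendsto_prod_jacobiTheta₂ (1 / 2 + c / 2 * τ) h5
  have hw : cexp (2 * π * I * (1 / 2 + c / 2 * τ)) = -cexp (π * I * τ) ^ c := by
    rw [show 2 * π * I * (1 / 2 + c / 2 * τ) = π * I + c * (π * I * τ) by ring, Complex.exp_add,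
      exp_pi_mul_I, neg_one_mul, Complex.exp_nat_mul]
  have hx : cexp (π * I * (5 * τ)) = cexp (π * I * τ) ^ 5 := by
    rw [← Complex.exp_nat_mul]
    congr 1
    push_cast
    ring
  have hq : cexp (2 * π * I * (5 * τ)) = cexp (2 * π * I * τ) ^ 5 := by
    rw [← Complex.exp_nat_mul]
    congr 1
    push_cast
    ring
  rw [hq] at h
  refine h.congr fun n => Finset.prod_congr rfl fun k _ => ?_
  rw [hw, hx, ← cexp_pi_mul_I_sq]
  have hx0 := exp_ne_zero (π * I * τ)
  generalize cexp (π * I * τ) = x at hx0 ⊢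
  have e1 : x ^ c * (x ^ 5) ^ (2 * k + 1) = (x ^ 2) ^ (5 * k + a) := by
    rw [← pow_mul, ← pow_add, ← pow_mul]
    congr 1
    lia
  have e2 : (x ^ 5) ^ (2 * k + 1) = x ^ c * (x ^ 2) ^ (5 * k + b) := by
    rw [← pow_mul, ← pow_mul, ← pow_add]
    congr 1
    lia
  rw [neg_mul, e1, inv_neg, neg_mul, e2, inv_mul_cancel_left₀ (pow_ne_zero c hx0),
    ← sub_eq_add_neg, ← sub_eq_add_neg]

lemma dedekindEta_ne_zero {τ : ℂ} (hτ : 0 < τ.im) : dedekindEta τ ≠ 0 := by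
  rw [dedekindEta_eq]
  exact mul_ne_zero (exp_ne_zero _) (eulerProd_ne_zero (norm_cexp_two_pi_mul_I_lt_one hτ))

lemma differentiableAt_dedekindEta {τ : ℂ} (hτ : 0 < τ.im) : DifferentiableAt ℂ dedekindEta τ := by
  have hq : cexp (2 * π * I * τ) ∈ Metric.ball (0 : ℂ) 1 := by
    simpa using norm_cexp_two_pi_mul_I_lt_one hτ
  have h1 : DifferentiableAt ℂ (fun t : ℂ => ∏' n : ℕ, (1 - cexp (2 * π * I * t) ^ (n + 1))) τ :=
    (ModularForm.differentiableOn_tprod_one_sub_pow.differentiableAt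
      (Metric.isOpen_ball.mem_nhds hq)).comp τ (f := fun t : ℂ => cexp (2 * π * I * t))
      (by fun_prop)
  have h2 : DifferentiableAt ℂ (fun t : ℂ => cexp (2 * π * I * t / 24)) τ := by fun_prop
  exact h2.mul h1

/-- Product formula for the Rogers–Ramanujan characters in terms of theta series. -/
lemma cexp_mul_tprod_inv_eq_thetaFive_div {a b c d e : ℕ} (ha : 5 + c = 2 * a)
    (hb : 2 * b + c = 5) (hd : 0 < d) (he : 0 < e) {r : ℂ} (hr : r = c ^ 2 / 40 - 1 / 24) {τ : ℂ}
    (hτ : 0 < τ.im)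
    (hperm : ∀ (q : ℂ) (k : ℕ), (1 - q ^ (5 * k + 1)) * (1 - q ^ (5 * k + 2)) *
      ((1 - q ^ (5 * k + 3)) * (1 - q ^ (5 * k + 4))) =
      (1 - q ^ (5 * k + a)) * (1 - q ^ (5 * k + b)) *
      ((1 - q ^ (5 * k + d)) * (1 - q ^ (5 * k + e)))) :
    cexp (2 * π * I * τ * r) * ∏' n : ℕ, ((1 - cexp (2 * π * I * τ) ^ (5 * n + d)) *
      (1 - cexp (2 * π * I * τ) ^ (5 * n + e)))⁻¹ = thetaFive c τ / dedekindEta τ := by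
  have hq := norm_cexp_two_pi_mul_I_lt_one hτ
  rw [tprod_inv_eq_of_tendsto hq hd he (hperm _) (tendsto_prod_thetaFive ha hb hτ), thetaFive,
    dedekindEta_eq, hr, mul_sub, Complex.exp_sub,
    show 2 * π * I * τ * (1 / 24) = 2 * π * I * τ / 24 by ring, div_mul_div_comm]

/-- The Wronskian of the two theta series is proportional to the sixth power of eta. -/
lemma wronskian_thetaFive {τ d₁ d₃ : ℂ} (hτ : 0 < τ.im)
    (h₁ : HasSum (fun j : ℤ => (10 * j + 1) ^ 2 / 40 * thetaFiveTerm 1 τ j) d₁)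
    (h₃ : HasSum (fun j : ℤ => (10 * j + 3) ^ 2 / 40 * thetaFiveTerm 3 τ j) d₃) :
    thetaFive 3 τ * d₁ - d₃ * thetaFive 1 τ = -(1 / 5) * dedekindEta τ ^ 6 := by
  have h := (((hasSum_thetaFiveTerm 1 hτ).mul_prod h₃).sub
    (h₁.mul_prod (hasSum_thetaFiveTerm 3 hτ))).mul_left 40
  have hb := hasSum_offsetOddPair_unique hτ (h.of_eq (fun p => ?_) rfl)
  · linear_combination -hb / 40
  · rw [oddPairTerm_offsetOddPair, thetaFiveTerm, thetaFiveTerm]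
    ring

end RogersRamanujan

/-- The Wronskian (with respect to `' = (2πi)⁻¹ d/dτ = q d/dq`) of the two modified
`c = -22/5` characters equals `(-1/5) q^{1/6} ∏_{n≥1}(1-qⁿ)⁴ = (-1/5) η(τ)⁴`. -/
theorem wronskian_RR_characters (y₁ y₂ : ℂ → ℂ)
    (hy₁ : y₁ = fun τ : ℂ => Complex.exp (2 * π * I * τ * (11 / 60)) *
      ∏' n : ℕ, ((1 - Complex.exp (2 * π * I * τ) ^ (5 * n + 2))
        * (1 - Complex.exp (2 * π * I * τ) ^ (5 * n + 3)))⁻¹)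
    (hy₂ : y₂ = fun τ : ℂ => Complex.exp (2 * π * I * τ * (-1 / 60)) *
      ∏' n : ℕ, ((1 - Complex.exp (2 * π * I * τ) ^ (5 * n + 1))
        * (1 - Complex.exp (2 * π * I * τ) ^ (5 * n + 4)))⁻¹)
    (D : (ℂ → ℂ) → (ℂ → ℂ)) (hD : D = fun f => fun τ => (2 * π * I)⁻¹ * deriv f τ)
    (τ : ℂ) (hτ : 0 < τ.im) :
    y₁ τ * D y₂ τ - D y₁ τ * y₂ τ
        = -(1 / 5) * Complex.exp (2 * π * I * τ / 6)
            * ∏' n : ℕ, (1 - Complex.exp (2 * π * I * τ) ^ (n + 1)) ^ 4 ∧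
      y₁ τ * D y₂ τ - D y₁ τ * y₂ τ = -(1 / 5) * dedekindEta τ ^ 4 := by
  have hpi := two_pi_I_ne_zero
  have hE0 := dedekindEta_ne_zero hτ
  have hE := (differentiableAt_dedekindEta hτ).hasDerivAt
  obtain ⟨d₁, hd₁, hs₁⟩ := exists_hasDerivAt_thetaFive 1 hτ
  obtain ⟨d₃, hd₃, hs₃⟩ := exists_hasDerivAt_thetaFive 3 hτ
  have hW := wronskian_thetaFive hτ hs₁ hs₃
  have e₁ (t : ℂ) (ht : 0 < t.im) : y₁ t = thetaFive 3 t / dedekindEta t := by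
    rw [hy₁]
    exact cexp_mul_tprod_inv_eq_thetaFive_div (a := 4) (b := 1) (c := 3) rfl rfl two_pos
      three_pos (by norm_num) ht (fun q k => by ring)
  have e₂ (t : ℂ) (ht : 0 < t.im) : y₂ t = thetaFive 1 t / dedekindEta t := by
    rw [hy₂]
    simpa using cexp_mul_tprod_inv_eq_thetaFive_div (a := 3) (b := 2) (c := 1) (r := -1 / 60)
      rfl rfl one_pos four_pos (by norm_num) ht (fun q k => by ring)
  have hU : ∀ᶠ t : ℂ in 𝓝 τ, 0 < t.im :=
    (isOpen_lt continuous_const continuous_im).mem_nhds hτ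
  have hy₁' := ((hd₃.div hE hE0).congr_of_eventuallyEq (hU.mono e₁)).deriv
  have hy₂' := ((hd₁.div hE hE0).congr_of_eventuallyEq (hU.mono e₂)).deriv
  have main : y₁ τ * D y₂ τ - D y₁ τ * y₂ τ = -(1 / 5) * dedekindEta τ ^ 4 := by
    subst hD
    simp only
    rw [hy₁', hy₂', e₁ τ hτ, e₂ τ hτ]
    generalize deriv dedekindEta τ = E' at *
    have : thetaFive 3 τ / dedekindEta τ * ((2 * π * I)⁻¹ * ((2 * π * I * d₁ * dedekindEta τ -
        thetaFive 1 τ * E') / dedekindEta τ ^ 2)) - (2 * π * I)⁻¹ *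
        ((2 * π * I * d₃ * dedekindEta τ - thetaFive 3 τ * E') / dedekindEta τ ^ 2) *
        (thetaFive 1 τ / dedekindEta τ) =
        (thetaFive 3 τ * d₁ - d₃ * thetaFive 1 τ) / dedekindEta τ ^ 2 := by
      generalize 2 * π * I = P at *
      field_simp
      ring
    rw [this, hW]
    field_simp
  refine ⟨?_, main⟩
  rw [main, (ModularForm.multipliable_one_sub_pow (norm_cexp_two_pi_mul_I_lt_one hτ)).tprod_pow,
    dedekindEta, mul_pow, ← Complex.exp_nat_mul,
    show ((4 : ℕ) : ℂ) * (2 * π * I * τ / 24) = 2 * π * I * τ / 6 by push_cast; ring]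
  ring
end
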